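/- arXiv:1803.01306 — 12 statements merged into one kernel-verified Lean document; each statement's English description precedes it below -/
import Mathlib

section
/- Let Σ ⊆ ℝ² be an open set, ρ : Σ → (0,∞) a smooth function, and X, N : Σ → ℝ³ smooth maps satisfying the Gauss–Weingarten system and the conformal frame relations with respect to the Minkowski inner product. Then at every point p ∈ Σ the following three conditions are equivalent: (i) det(X_u, X_uu, X_uuu)(p) = 0 (the condition that the u-curvature lines are planar); (ii) det(X_v, X_vv, X_vvv)(p) = 0 (the condition that the v-curvature lines are planar); (iii) ρ_uv(p) = 0. Here det denotes the determinant of the 3×3 matrix whose rows are the indicated vectors, and subscripts denote partial derivatives. -/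
open Real Filter

/-- Partial derivative in the first variable. -/
noncomputable def pu {E : Type*} [NormedAddCommGroup E] [NormedSpace ℝ E]
    (f : ℝ → ℝ → E) (u v : ℝ) : E := deriv (fun x => f x v) u

/-- Partial derivative in the second variable. -/
noncomputable def pv {E : Type*} [NormedAddCommGroup E] [NormedSpace ℝ E]
    (f : ℝ → ℝ → E) (u v : ℝ) : E := deriv (fun y => f u y) v

/-- Minkowski inner product on ℝ³ = ℝ^{2,1}, with coordinates (x₁, x₂, x₀). -/
def mink (x y : ℝ × ℝ × ℝ) : ℝ := x.1 * y.1 + x.2.1 * y.2.1 - x.2.2 * y.2.2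

/-- Determinant of the 3×3 matrix with rows a, b, c. -/
def det3 (a b c : ℝ × ℝ × ℝ) : ℝ :=
  a.1 * (b.2.1 * c.2.2 - b.2.2 * c.2.1)
    - a.2.1 * (b.1 * c.2.2 - b.2.2 * c.1)
    + a.2.2 * (b.1 * c.2.1 - b.2.1 * c.1)

section helpers

variable {E : Type*} [NormedAddCommGroup E] [NormedSpace ℝ E]

lemma aux_hasDerivAt_u {f : ℝ → ℝ → E} {p : ℝ × ℝ}
    (h : DifferentiableAt ℝ (fun q : ℝ × ℝ => f q.1 q.2) p) :
    HasDerivAt (fun x => f x p.2) (fderiv ℝ (fun q : ℝ × ℝ => f q.1 q.2) p (1, 0)) p.1 := by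
  have h1 : HasDerivAt (fun x : ℝ => ((x, p.2) : ℝ × ℝ)) (1, 0) p.1 :=
    (hasDerivAt_id p.1).prodMk (hasDerivAt_const p.1 p.2)
  exact HasFDerivAt.comp_hasDerivAt (f := fun x : ℝ => ((x, p.2) : ℝ × ℝ)) p.1
    (h.hasFDerivAt (x := p)) h1

lemma aux_hasDerivAt_v {f : ℝ → ℝ → E} {p : ℝ × ℝ}
    (h : DifferentiableAt ℝ (fun q : ℝ × ℝ => f q.1 q.2) p) :
    HasDerivAt (fun y => f p.1 y) (fderiv ℝ (fun q : ℝ × ℝ => f q.1 q.2) p (0, 1)) p.2 := by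
  have h1 : HasDerivAt (fun y : ℝ => ((p.1, y) : ℝ × ℝ)) (0, 1) p.2 :=
    (hasDerivAt_const p.2 p.1).prodMk (hasDerivAt_id p.2)
  exact HasFDerivAt.comp_hasDerivAt (f := fun y : ℝ => ((p.1, y) : ℝ × ℝ)) p.2
    (h.hasFDerivAt (x := p)) h1

lemma aux_pu {f : ℝ → ℝ → E} {p : ℝ × ℝ}
    (h : DifferentiableAt ℝ (fun q : ℝ × ℝ => f q.1 q.2) p) :
    pu f p.1 p.2 = fderiv ℝ (fun q : ℝ × ℝ => f q.1 q.2) p (1, 0) :=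
  (aux_hasDerivAt_u h).deriv

lemma aux_pv {f : ℝ → ℝ → E} {p : ℝ × ℝ}
    (h : DifferentiableAt ℝ (fun q : ℝ × ℝ => f q.1 q.2) p) :
    pv f p.1 p.2 = fderiv ℝ (fun q : ℝ × ℝ => f q.1 q.2) p (0, 1) :=
  (aux_hasDerivAt_v h).deriv

lemma aux_hu {f : ℝ → ℝ → E} {p : ℝ × ℝ}
    (h : DifferentiableAt ℝ (fun q : ℝ × ℝ => f q.1 q.2) p) :
    HasDerivAt (fun x => f x p.2) (pu f p.1 p.2) p.1 := by
  rw [aux_pu h]; exact aux_hasDerivAt_u h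

lemma aux_hv {f : ℝ → ℝ → E} {p : ℝ × ℝ}
    (h : DifferentiableAt ℝ (fun q : ℝ × ℝ => f q.1 q.2) p) :
    HasDerivAt (fun y => f p.1 y) (pv f p.1 p.2) p.2 := by
  rw [aux_pv h]; exact aux_hasDerivAt_v h

lemma aux_diff {S : Set (ℝ × ℝ)} (hS : IsOpen S) {g : ℝ × ℝ → E}
    (h : ContDiffOn ℝ (⊤ : ℕ∞) g S) {p : ℝ × ℝ} (hp : p ∈ S) : DifferentiableAt ℝ g p :=
  (h.contDiffAt (hS.mem_nhds hp)).differentiableAt (by simp)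

lemma aux_fd {S : Set (ℝ × ℝ)} (hS : IsOpen S) {g : ℝ × ℝ → E}
    (h : ContDiffOn ℝ (⊤ : ℕ∞) g S) : ContDiffOn ℝ (⊤ : ℕ∞) (fderiv ℝ g) S :=
  h.fderiv_of_isOpen hS (by simp)

lemma aux_smooth_u {S : Set (ℝ × ℝ)} (hS : IsOpen S) {f : ℝ → ℝ → E}
    (h : ContDiffOn ℝ (⊤ : ℕ∞) (fun q : ℝ × ℝ => f q.1 q.2) S) :
    ContDiffOn ℝ (⊤ : ℕ∞) (fun q : ℝ × ℝ => pu f q.1 q.2) S :=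
  ((aux_fd hS h).clm_apply contDiffOn_const).congr fun _ hq => aux_pu (aux_diff hS h hq)

lemma aux_smooth_v {S : Set (ℝ × ℝ)} (hS : IsOpen S) {f : ℝ → ℝ → E}
    (h : ContDiffOn ℝ (⊤ : ℕ∞) (fun q : ℝ × ℝ => f q.1 q.2) S) :
    ContDiffOn ℝ (⊤ : ℕ∞) (fun q : ℝ × ℝ => pv f q.1 q.2) S :=
  ((aux_fd hS h).clm_apply contDiffOn_const).congr fun _ hq => aux_pv (aux_diff hS h hq)

lemma aux_symm {S : Set (ℝ × ℝ)} (hS : IsOpen S) {f : ℝ → ℝ → E}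
    (h : ContDiffOn ℝ (⊤ : ℕ∞) (fun q : ℝ × ℝ => f q.1 q.2) S) {p : ℝ × ℝ} (hp : p ∈ S) :
    pu (pv f) p.1 p.2 = pv (pu f) p.1 p.2 := by
  have hd := aux_diff hS (aux_fd hS h) hp
  rw [aux_pu (aux_diff hS (aux_smooth_v hS h) hp), aux_pv (aux_diff hS (aux_smooth_u hS h) hp)]
  have e1 : (fun q : ℝ × ℝ => pv f q.1 q.2) =ᶠ[nhds p]
      fun q => fderiv ℝ (fun q : ℝ × ℝ => f q.1 q.2) q (0, 1) := by
    filter_upwards [hS.mem_nhds hp] with q hq using aux_pv (aux_diff hS h hq)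
  have e2 : (fun q : ℝ × ℝ => pu f q.1 q.2) =ᶠ[nhds p]
      fun q => fderiv ℝ (fun q : ℝ × ℝ => f q.1 q.2) q (1, 0) := by
    filter_upwards [hS.mem_nhds hp] with q hq using aux_pu (aux_diff hS h hq)
  have hs : IsSymmSndFDerivAt ℝ (fun q : ℝ × ℝ => f q.1 q.2) p :=
    (h.contDiffAt (hS.mem_nhds hp)).isSymmSndFDerivAt (by
      rw [minSmoothness_of_isRCLikeNormedField]
      exact WithTop.coe_le_coe.2 (le_top : (2 : ℕ∞) ≤ ⊤))
  rw [e1.fderiv_eq, e2.fderiv_eq, fderiv_clm_apply hd (differentiableAt_const _),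
    fderiv_clm_apply hd (differentiableAt_const _)]
  simpa using hs.eq (1, 0) (0, 1)

lemma aux_ev_u {S : Set (ℝ × ℝ)} (hS : IsOpen S) {p : ℝ × ℝ} (hp : p ∈ S) :
    ∀ᶠ x in nhds p.1, (x, p.2) ∈ S := by
  have hc : ContinuousAt (fun x : ℝ => ((x, p.2) : ℝ × ℝ)) p.1 := by fun_prop
  exact hc (hS.mem_nhds hp)

lemma aux_ev_v {S : Set (ℝ × ℝ)} (hS : IsOpen S) {p : ℝ × ℝ} (hp : p ∈ S) :
    ∀ᶠ y in nhds p.2, (p.1, y) ∈ S := by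
  have hc : ContinuousAt (fun y : ℝ => ((p.1, y) : ℝ × ℝ)) p.2 := by fun_prop
  exact hc (hS.mem_nhds hp)

end helpers

lemma aux_gram (a b c : ℝ × ℝ × ℝ) (r : ℝ) (hr : 0 < r) (h1 : mink a a = r ^ 2)
    (h2 : mink b b = r ^ 2) (h3 : mink a b = 0) (h4 : mink a c = 0) (h5 : mink b c = 0)
    (h6 : mink c c = -1) : det3 a b c ≠ 0 := by
  have key : -(det3 a b c) ^ 2 = mink a a * (mink b b * mink c c - mink b c * mink b c)
      - mink a b * (mink a b * mink c c - mink b c * mink a c)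
      + mink a c * (mink a b * mink b c - mink b b * mink a c) := by
    simp only [mink, det3]; ring
  rw [h1, h2, h3, h4, h5, h6] at key
  intro h0
  rw [h0] at key
  have : 0 < r ^ 2 * r ^ 2 := by positivity
  nlinarith

lemma aux_iff {d m r D : ℝ} (hr : r ≠ 0) (hD : D ≠ 0) (h : r * d = m * D) : d = 0 ↔ m = 0 := by
  constructor
  · rintro rfl
    simpa [hD] using h.symm
  · rintro rfl
    simpa [hr] using h

/-- For a conformal maximal surface frame (X, N, ρ) satisfying the
Gauss–Weingarten system and the conformal frame relations with respect to the Minkowski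
inner product on ℝ^{2,1}, at every point of the open set Σ the planarity of the
u-curvature lines, the planarity of the v-curvature lines, and the condition ρ_uv = 0
are all equivalent. -/
theorem planar_curvature_line_conditions_equivalent
    (S : Set (ℝ × ℝ)) (hS : IsOpen S)
    (ρ : ℝ → ℝ → ℝ) (X N : ℝ → ℝ → ℝ × ℝ × ℝ)
    (hρ : ContDiffOn ℝ (⊤ : ℕ∞) (fun p : ℝ × ℝ => ρ p.1 p.2) S)
    (hρpos : ∀ p ∈ S, 0 < ρ p.1 p.2)
    (hX : ContDiffOn ℝ (⊤ : ℕ∞) (fun p : ℝ × ℝ => X p.1 p.2) S)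
    (hN : ContDiffOn ℝ (⊤ : ℕ∞) (fun p : ℝ × ℝ => N p.1 p.2) S)
    (hGW1 : ∀ p ∈ S, pu (pu X) p.1 p.2 =
      (pu ρ p.1 p.2 / ρ p.1 p.2) • pu X p.1 p.2
        - (pv ρ p.1 p.2 / ρ p.1 p.2) • pv X p.1 p.2 + N p.1 p.2)
    (hGW2 : ∀ p ∈ S, pv (pv X) p.1 p.2 =
      -((pu ρ p.1 p.2 / ρ p.1 p.2) • pu X p.1 p.2)
        + (pv ρ p.1 p.2 / ρ p.1 p.2) • pv X p.1 p.2 - N p.1 p.2)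
    (hGW3 : ∀ p ∈ S, pv (pu X) p.1 p.2 =
      (pv ρ p.1 p.2 / ρ p.1 p.2) • pu X p.1 p.2
        + (pu ρ p.1 p.2 / ρ p.1 p.2) • pv X p.1 p.2)
    (hGW4 : ∀ p ∈ S, pu N p.1 p.2 = ((ρ p.1 p.2) ^ 2)⁻¹ • pu X p.1 p.2)
    (hGW5 : ∀ p ∈ S, pv N p.1 p.2 = -(((ρ p.1 p.2) ^ 2)⁻¹ • pv X p.1 p.2))
    (hfr1 : ∀ p ∈ S, mink (pu X p.1 p.2) (pu X p.1 p.2) = (ρ p.1 p.2) ^ 2)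
    (hfr2 : ∀ p ∈ S, mink (pv X p.1 p.2) (pv X p.1 p.2) = (ρ p.1 p.2) ^ 2)
    (hfr3 : ∀ p ∈ S, mink (pu X p.1 p.2) (pv X p.1 p.2) = 0)
    (hfr4 : ∀ p ∈ S, mink (pu X p.1 p.2) (N p.1 p.2) = 0)
    (hfr5 : ∀ p ∈ S, mink (pv X p.1 p.2) (N p.1 p.2) = 0)
    (hfr6 : ∀ p ∈ S, mink (N p.1 p.2) (N p.1 p.2) = -1) :
    ∀ p ∈ S,
      (det3 (pu X p.1 p.2) (pu (pu X) p.1 p.2) (pu (pu (pu X)) p.1 p.2) = 0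
          ↔ pv (pu ρ) p.1 p.2 = 0) ∧
      (det3 (pv X p.1 p.2) (pv (pv X) p.1 p.2) (pv (pv (pv X)) p.1 p.2) = 0
          ↔ pv (pu ρ) p.1 p.2 = 0) := by
  intro p hp
  have sXu := aux_smooth_u hS hX
  have sXv := aux_smooth_v hS hX
  have sru := aux_smooth_u hS hρ
  have srv := aux_smooth_v hS hρ
  have hr := hρpos p hp
  have hr0 := hr.ne'
  have hD := aux_gram _ _ _ _ hr (hfr1 p hp) (hfr2 p hp) (hfr3 p hp) (hfr4 p hp) (hfr5 p hp)
    (hfr6 p hp)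
  have mX := aux_symm hS hX hp
  have mr := aux_symm hS hρ hp
  constructor
  · have ee : (fun x => pu (pu X) x p.2) =ᶠ[nhds p.1] fun x =>
        (pu ρ x p.2 / ρ x p.2) • pu X x p.2 - (pv ρ x p.2 / ρ x p.2) • pv X x p.2 + N x p.2 := by
      filter_upwards [aux_ev_u hS hp] with x hx using hGW1 _ hx
    have e := ee.deriv_eq.trans (((((aux_hu (aux_diff hS sru hp)).div (aux_hu (aux_diff hS hρ hp))
      hr0).smul (aux_hu (aux_diff hS sXu hp))).sub
      (((aux_hu (aux_diff hS srv hp)).div (aux_hu (aux_diff hS hρ hp)) hr0).smul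
      (aux_hu (aux_diff hS sXv hp)))).add (aux_hu (aux_diff hS hN hp))).deriv
    change pu (pu (pu X)) p.1 p.2 = _ at e
    rw [mX, mr, hGW1 p hp, hGW3 p hp, hGW4 p hp] at e
    rw [e, hGW1 p hp]
    refine aux_iff hr0 hD ?_
    simp only [det3, Prod.fst_add, Prod.snd_add, Prod.fst_sub, Prod.snd_sub, Prod.smul_fst,
      Prod.smul_snd, smul_eq_mul, Pi.div_apply]
    field_simp
    ring
  · have ee : (fun y => pv (pv X) p.1 y) =ᶠ[nhds p.2] fun y =>
        -((pu ρ p.1 y / ρ p.1 y) • pu X p.1 y) + (pv ρ p.1 y / ρ p.1 y) • pv X p.1 y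
          - N p.1 y := by
      filter_upwards [aux_ev_v hS hp] with x hx using hGW2 _ hx
    have e := ee.deriv_eq.trans (((((aux_hv (aux_diff hS sru hp)).div (aux_hv (aux_diff hS hρ hp))
      hr0).smul (aux_hv (aux_diff hS sXu hp))).neg.add
      (((aux_hv (aux_diff hS srv hp)).div (aux_hv (aux_diff hS hρ hp)) hr0).smul
      (aux_hv (aux_diff hS sXv hp)))).sub (aux_hv (aux_diff hS hN hp))).deriv
    change pv (pv (pv X)) p.1 p.2 = _ at e
    rw [hGW2 p hp, hGW3 p hp, hGW5 p hp] at e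
    rw [e, hGW2 p hp]
    refine aux_iff hr0 hD ?_
    simp only [det3, Prod.fst_add, Prod.snd_add, Prod.fst_sub, Prod.snd_sub, Prod.smul_fst,
      Prod.smul_snd, Prod.fst_neg, Prod.snd_neg, smul_eq_mul, Pi.div_apply]
    field_simp
    ring
end

section
/- Let I, J ⊆ ℝ be open intervals and let ρ : I×J → (0,∞) be a smooth solution of the PDE system such that Δρ = ρ_uu + ρ_vv is nowhere zero on I×J. Then there exist twice continuously differentiable functions f : I → ℝ and g : J → ℝ and real constants c, d with c² + d² ≠ 0 such that: ρ_u(u,v) = f(u) and ρ_v(u,v) = g(v) for all (u,v) ∈ I×J; f and g satisfy the ODE system with constants c, d on I and J respectively; f′(u) + g′(v) ≠ 0 for all (u,v) ∈ I×J; and ρ(u,v) = (f(u)² + g(v)² − 1)/(f′(u) + g′(v)) on I×J. -/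
open Real Filter

theorem const_on_aux {S : Set ℝ} (hS : IsOpen S) (hc : S.OrdConnected) {h : ℝ → ℝ}
    (hd : ∀ x ∈ S, HasDerivAt h 0 x) {a b : ℝ} (ha : a ∈ S) (hb : b ∈ S) : h a = h b :=
  hS.is_const_of_deriv_eq_zero hc.isPreconnected
    (fun x hx => (hd x hx).differentiableAt.differentiableWithinAt)
    (fun x hx => (hd x hx).deriv) ha hb

theorem smooth_deriv_aux {S : Set ℝ} (hS : IsOpen S) {F : ℝ → ℝ}
    (hF : ContDiffOn ℝ (⊤ : ℕ∞) F S) : ContDiffOn ℝ (⊤ : ℕ∞) (deriv F) S :=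
  hF.deriv_of_isOpen hS (by simp)

theorem smooth_hasDerivAt_aux {S : Set ℝ} (hS : IsOpen S) {F : ℝ → ℝ}
    (hF : ContDiffOn ℝ (⊤ : ℕ∞) F S) {x : ℝ} (hx : x ∈ S) : HasDerivAt F (deriv F x) x :=
  ((hF.contDiffAt (hS.mem_nhds hx)).differentiableAt (by simp)).hasDerivAt

/-- Differentiating the Gauss equation in one variable. -/
theorem gauss_deriv_aux {S : Set ℝ} (hS : IsOpen S) {F : ℝ → ℝ}
    (hF : ContDiffOn ℝ (⊤ : ℕ∞) F S) (a b e : ℝ)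
    (hG : ∀ x ∈ S, (F x + a) * (deriv (deriv F) x + b) - ((deriv F x) ^ 2 + e) + 1 = 0)
    {x : ℝ} (hx : x ∈ S) :
    (F x + a) * deriv (deriv (deriv F)) x = deriv F x * (deriv (deriv F) x - b) := by
  have h1 := smooth_hasDerivAt_aux hS hF hx
  have h2 := smooth_hasDerivAt_aux hS (smooth_deriv_aux hS hF) hx
  have h3 := smooth_hasDerivAt_aux hS (smooth_deriv_aux hS (smooth_deriv_aux hS hF)) hx
  have h4 := (((h1.add_const a).mul (h3.add_const b)).sub ((h2.pow 2).add_const e)).add_const 1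
  have h5 : HasDerivAt (fun _ : ℝ => (0 : ℝ)) 0 x := hasDerivAt_const _ _
  have h6 := h4.congr_of_eventuallyEq (f₁ := fun _ => (0 : ℝ)) (by
    filter_upwards [hS.mem_nhds hx] with y hy
    have := hG y hy
    simp only [Pi.mul_apply, Pi.sub_apply, Pi.pow_apply]
    linarith)
  have h7 := h6.unique h5
  norm_num at h7
  linarith

/-- The quotient `(F'' - b) / (F + a)` is constant. -/
theorem quot_const_aux {S : Set ℝ} (hS : IsOpen S) (hc : S.OrdConnected) {F : ℝ → ℝ}
    (hF : ContDiffOn ℝ (⊤ : ℕ∞) F S) (a b e : ℝ) (hpos : ∀ x ∈ S, 0 < F x + a)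
    (hG : ∀ x ∈ S, (F x + a) * (deriv (deriv F) x + b) - ((deriv F x) ^ 2 + e) + 1 = 0)
    {x y : ℝ} (hx : x ∈ S) (hy : y ∈ S) :
    (deriv (deriv F) x - b) / (F x + a) = (deriv (deriv F) y - b) / (F y + a) := by
  refine const_on_aux (h := fun x => (deriv (deriv F) x - b) / (F x + a)) hS hc ?_ hx hy
  intro z hz
  have h1 := smooth_hasDerivAt_aux hS hF hz
  have h3 := smooth_hasDerivAt_aux hS (smooth_deriv_aux hS (smooth_deriv_aux hS hF)) hz
  have h := (h3.sub_const b).div (h1.add_const a) (hpos z hz).ne'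
  have hg := gauss_deriv_aux hS hF a b e hG hz
  refine HasDerivAt.congr_deriv h ?_
  rw [div_eq_zero_iff]
  left
  linarith

/-- The first integral of `f'' = k f`. -/
theorem energy_const_aux {S : Set ℝ} (hS : IsOpen S) (hc : S.OrdConnected) {F : ℝ → ℝ}
    (hF : ContDiffOn ℝ (⊤ : ℕ∞) F S) (k : ℝ)
    (hk : ∀ x ∈ S, deriv (deriv F) x = k * F x) {x y : ℝ} (hx : x ∈ S) (hy : y ∈ S) :
    (deriv F x) ^ 2 - k * (F x) ^ 2 = (deriv F y) ^ 2 - k * (F y) ^ 2 := by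
  refine const_on_aux (h := fun x => (deriv F x) ^ 2 - k * (F x) ^ 2) hS hc ?_ hx hy
  intro z hz
  have h1 := smooth_hasDerivAt_aux hS hF hz
  have h2 := smooth_hasDerivAt_aux hS (smooth_deriv_aux hS hF) hz
  have h := (h2.pow 2).sub ((h1.pow 2).const_mul k)
  refine HasDerivAt.congr_deriv h ?_
  rw [hk z hz]
  norm_num
  ring

/-- If ρ is a smooth positive solution of the Gauss equation and the
planar curvature line condition on a product of open intervals I×J, and Δρ is nowhere
zero there, then ρ_u and ρ_v separate variables into C² functions f, g satisfying the
ODE system for some constants c, d with c² + d² ≠ 0, and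
ρ = (f² + g² − 1)/(f′ + g′) on I×J. -/
theorem metric_separates_and_solves_ode
    (I J : Set ℝ) (hIo : IsOpen I) (hJo : IsOpen J)
    (hIc : I.OrdConnected) (hJc : J.OrdConnected)
    (ρ : ℝ → ℝ → ℝ)
    (hρ : ContDiffOn ℝ (⊤ : ℕ∞) (fun p : ℝ × ℝ => ρ p.1 p.2) (I ×ˢ J))
    (hρpos : ∀ u ∈ I, ∀ v ∈ J, 0 < ρ u v)
    (hGauss : ∀ u ∈ I, ∀ v ∈ J,
      ρ u v * (pu (pu ρ) u v + pv (pv ρ) u v)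
        - ((pu ρ u v) ^ 2 + (pv ρ u v) ^ 2) + 1 = 0)
    (hPlanar : ∀ u ∈ I, ∀ v ∈ J, pv (pu ρ) u v = 0)
    (hLap : ∀ u ∈ I, ∀ v ∈ J, pu (pu ρ) u v + pv (pv ρ) u v ≠ 0) :
    ∃ f g : ℝ → ℝ, ∃ c d : ℝ,
      c ^ 2 + d ^ 2 ≠ 0 ∧
      ContDiffOn ℝ 2 f I ∧ ContDiffOn ℝ 2 g J ∧
      (∀ u ∈ I, ∀ v ∈ J, pu ρ u v = f u ∧ pv ρ u v = g v) ∧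
      (∀ u ∈ I, (deriv f u) ^ 2 = (d - c) * (f u) ^ 2 + c ∧
        deriv (deriv f) u = (d - c) * f u) ∧
      (∀ v ∈ J, (deriv g v) ^ 2 = (c - d) * (g v) ^ 2 + d ∧
        deriv (deriv g) v = (c - d) * g v) ∧
      (∀ u ∈ I, ∀ v ∈ J, deriv f u + deriv g v ≠ 0) ∧
      (∀ u ∈ I, ∀ v ∈ J,
        ρ u v = ((f u) ^ 2 + (g v) ^ 2 - 1) / (deriv f u + deriv g v)) := by
  rcases I.eq_empty_or_nonempty with rfl | ⟨u0, hu0⟩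
  · refine ⟨fun _ => 0, fun _ => 0, 1, 0, ?_⟩
    simp [contDiffOn_const]
  rcases J.eq_empty_or_nonempty with rfl | ⟨v0, hv0⟩
  · refine ⟨fun _ => 0, fun _ => 0, 0, 1, ?_⟩
    simp [contDiffOn_const]
  have hO : IsOpen (I ×ˢ J) := hIo.prod hJo
  have hat : ∀ u ∈ I, ∀ v ∈ J, ContDiffAt ℝ (⊤ : ℕ∞) (fun p : ℝ × ℝ => ρ p.1 p.2) (u, v) :=
    fun u hu v hv => hρ.contDiffAt (hO.mem_nhds ⟨hu, hv⟩)
  have hsu : ∀ v ∈ J, ContDiffOn ℝ (⊤ : ℕ∞) (fun x => ρ x v) I := fun v hv =>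
    hρ.comp (f := fun x : ℝ => (x, v)) (by fun_prop) (fun x hx => ⟨hx, hv⟩)
  have hsv : ∀ u ∈ I, ContDiffOn ℝ (⊤ : ℕ∞) (fun y => ρ u y) J := fun u hu =>
    hρ.comp (f := fun y : ℝ => (u, y)) (by fun_prop) (fun y hy => ⟨hu, hy⟩)
  -- the partial derivative in terms of the total derivative
  have hpu : ∀ u ∈ I, ∀ v ∈ J,
      pu ρ u v = fderiv ℝ (fun p : ℝ × ℝ => ρ p.1 p.2) (u, v) (1, 0) := by
    intro u hu v hv
    have h1 := ((hat u hu v hv).differentiableAt (by simp)).hasFDerivAt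
    have h2 : HasDerivAt (fun x : ℝ => (x, v)) ((1 : ℝ), (0 : ℝ)) u :=
      (hasDerivAt_id u).prodMk (hasDerivAt_const u v)
    exact (h1.comp_hasDerivAt u h2).deriv
  have hpud : ∀ u ∈ I, ∀ v ∈ J, HasDerivAt (fun y => pu ρ u y) 0 v := by
    intro u hu v hv
    have h1 : ContDiffAt ℝ 1 (fderiv ℝ (fun p : ℝ × ℝ => ρ p.1 p.2)) (u, v) :=
      (hat u hu v hv).fderiv_right (by norm_cast)
    have h2 : DifferentiableAt ℝ (fun y : ℝ => (u, y)) v := by fun_prop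
    have h3 : DifferentiableAt ℝ (fun y : ℝ => fderiv ℝ (fun p : ℝ × ℝ => ρ p.1 p.2) (u, y)) v :=
      DifferentiableAt.comp v (h1.differentiableAt (by simp)) h2
    have h4 : DifferentiableAt ℝ (fun y => pu ρ u y) v := by
      refine (h3.clm_apply (differentiableAt_const ((1 : ℝ), (0 : ℝ)))).congr_of_eventuallyEq ?_
      filter_upwards [hJo.mem_nhds hv] with y hy
      exact hpu u hu y hy
    have h5 := h4.hasDerivAt
    rwa [show deriv (fun y => pu ρ u y) v = 0 from hPlanar u hu v hv] at h5
  have hpuc : ∀ u ∈ I, ∀ v ∈ J, pu ρ u v = pu ρ u v0 := fun u hu v hv =>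
    const_on_aux hJo hJc (hpud u hu) hv hv0
  obtain ⟨F, hFdef⟩ : ∃ F : ℝ → ℝ, F = fun x => ρ x v0 := ⟨_, rfl⟩
  obtain ⟨G, hGdef⟩ : ∃ G : ℝ → ℝ, G = fun y => ρ u0 y - ρ u0 v0 := ⟨_, rfl⟩
  have hF : ContDiffOn ℝ (⊤ : ℕ∞) F I := hFdef ▸ hsu v0 hv0
  have hG : ContDiffOn ℝ (⊤ : ℕ∞) G J := hGdef ▸ (hsv u0 hu0).sub contDiffOn_const
  have hsum : ∀ u ∈ I, ∀ v ∈ J, ρ u v = F u + G v := by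
    intro u hu v hv
    have := const_on_aux (h := fun x => ρ x v - ρ x v0) hIo hIc (fun x hx => by
      have h1 := smooth_hasDerivAt_aux hIo (hsu v hv) hx
      have h2 := smooth_hasDerivAt_aux hIo (hsu v0 hv0) hx
      have h3 := h1.sub h2
      have h4 : deriv (fun x => ρ x v) x = deriv (fun x => ρ x v0) x := hpuc x hx v hv
      rw [h4, sub_self] at h3
      exact h3) hu hu0
    simp only [hFdef, hGdef]
    linarith
  have hu1 : ∀ u ∈ I, ∀ v ∈ J, pu ρ u v = deriv F u := by
    intro u hu v hv
    have : (fun x => ρ x v) =ᶠ[nhds u] fun x => F x + G v := by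
      filter_upwards [hIo.mem_nhds hu] with x hx using hsum x hx v hv
    unfold pu
    rw [this.deriv_eq, deriv_add_const]
  have hv1 : ∀ u ∈ I, ∀ v ∈ J, pv ρ u v = deriv G v := by
    intro u hu v hv
    have : (fun y => ρ u y) =ᶠ[nhds v] fun y => F u + G y := by
      filter_upwards [hJo.mem_nhds hv] with y hy using hsum u hu y hy
    unfold pv
    rw [this.deriv_eq, deriv_const_add]
  have hu2 : ∀ u ∈ I, ∀ v ∈ J, pu (pu ρ) u v = deriv (deriv F) u := by
    intro u hu v hv
    have : (fun x => pu ρ x v) =ᶠ[nhds u] deriv F := by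
      filter_upwards [hIo.mem_nhds hu] with x hx using hu1 x hx v hv
    exact this.deriv_eq
  have hv2 : ∀ u ∈ I, ∀ v ∈ J, pv (pv ρ) u v = deriv (deriv G) v := by
    intro u hu v hv
    have : (fun y => pv ρ u y) =ᶠ[nhds v] deriv G := by
      filter_upwards [hJo.mem_nhds hv] with y hy using hv1 u hu y hy
    exact this.deriv_eq
  have hE : ∀ u ∈ I, ∀ v ∈ J, (F u + G v) * (deriv (deriv F) u + deriv (deriv G) v)
      - ((deriv F u) ^ 2 + (deriv G v) ^ 2) + 1 = 0 := by
    intro u hu v hv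
    have := hGauss u hu v hv
    rwa [hu1 u hu v hv, hv1 u hu v hv, hu2 u hu v hv, hv2 u hu v hv, hsum u hu v hv] at this
  have hE' : ∀ u ∈ I, ∀ v ∈ J, (G v + F u) * (deriv (deriv G) v + deriv (deriv F) u)
      - ((deriv G v) ^ 2 + (deriv F u) ^ 2) + 1 = 0 := by
    intro u hu v hv
    have := hE u hu v hv
    linarith
  have hP : ∀ u ∈ I, ∀ v ∈ J, 0 < F u + G v := fun u hu v hv =>
    hsum u hu v hv ▸ hρpos u hu v hv
  have hP' : ∀ u ∈ I, ∀ v ∈ J, 0 < G v + F u := fun u hu v hv =>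
    add_comm (F u) (G v) ▸ hP u hu v hv
  have hL : ∀ u ∈ I, ∀ v ∈ J, deriv (deriv F) u + deriv (deriv G) v ≠ 0 := by
    intro u hu v hv
    have := hLap u hu v hv
    rwa [hu2 u hu v hv, hv2 u hu v hv] at this
  obtain ⟨k, hkdef⟩ : ∃ k : ℝ,
    k = (deriv (deriv F) u0 - deriv (deriv G) v0) / (F u0 + G v0) := ⟨_, rfl⟩
  have hQ : ∀ u ∈ I, ∀ v ∈ J,
      deriv (deriv F) u - deriv (deriv G) v = k * (F u + G v) := by
    intro u hu v hv
    have h1 := quot_const_aux hIo hIc hF (G v) (deriv (deriv G) v) ((deriv G v) ^ 2)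
      (fun x hx => hP x hx v hv) (fun x hx => hE x hx v hv) hu hu0
    have h2 := quot_const_aux hJo hJc hG (F u0) (deriv (deriv F) u0) ((deriv F u0) ^ 2)
      (fun x hx => hP' u0 hu0 x hx) (fun x hx => hE' u0 hu0 x hx) hv hv0
    have h3 : (deriv (deriv F) u - deriv (deriv G) v) / (F u + G v) = k := by
      rw [h1, hkdef, ← neg_sub (deriv (deriv G) v), ← neg_sub (deriv (deriv G) v0), neg_div,
        neg_div, add_comm (F u0), add_comm (F u0), h2]
    rw [← h3, div_mul_cancel₀ _ (hP u hu v hv).ne']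
  have hf3 : ∀ u ∈ I, deriv (deriv (deriv F)) u = k * deriv F u := by
    intro u hu
    have h := gauss_deriv_aux hIo hF _ _ _ (fun x hx => hE x hx v0 hv0) hu
    rw [hQ u hu v0 hv0] at h
    apply mul_left_cancel₀ (hP u hu v0 hv0).ne'
    linarith
  have hg3 : ∀ v ∈ J, deriv (deriv (deriv G)) v = (-k) * deriv G v := by
    intro v hv
    have h := gauss_deriv_aux hJo hG _ _ _ (fun x hx => hE' u0 hu0 x hx) hv
    have h' := hQ u0 hu0 v hv
    apply mul_left_cancel₀ (hP' u0 hu0 v hv).ne'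
    rw [h]
    linear_combination (-deriv G v) * h'
  have hf' := smooth_deriv_aux hIo hF
  have hg' := smooth_deriv_aux hJo hG
  obtain ⟨c, hc⟩ : ∃ c, c = (deriv (deriv F) u0) ^ 2 - k * (deriv F u0) ^ 2 := ⟨_, rfl⟩
  obtain ⟨d, hd⟩ : ∃ d, d = (deriv (deriv G) v0) ^ 2 - (-k) * (deriv G v0) ^ 2 := ⟨_, rfl⟩
  have hce : ∀ u ∈ I, (deriv (deriv F) u) ^ 2 - k * (deriv F u) ^ 2 = c := fun u hu =>
    (energy_const_aux hIo hIc hf' k hf3 hu hu0).trans hc.symm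
  have hde : ∀ v ∈ J, (deriv (deriv G) v) ^ 2 - (-k) * (deriv G v) ^ 2 = d := fun v hv =>
    (energy_const_aux hJo hJc hg' (-k) hg3 hv hv0).trans hd.symm
  have hk : d - c = k := by
    rw [hc, hd]
    linear_combination (-(deriv (deriv F) u0 + deriv (deriv G) v0)) * hQ u0 hu0 v0 hv0
      - k * hE u0 hu0 v0 hv0
  have hk' : c - d = -k := by linarith
  refine ⟨deriv F, deriv G, c, d, ?_, hf'.of_le (by norm_cast), hg'.of_le (by norm_cast),
    fun u hu v hv => ⟨hu1 u hu v hv, hv1 u hu v hv⟩, ?_, ?_, hL, ?_⟩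
  · intro h0
    have hc0 : c = 0 := by nlinarith [sq_nonneg c, sq_nonneg d]
    have hd0 : d = 0 := by nlinarith [sq_nonneg c, sq_nonneg d]
    have hk0 : k = 0 := by rw [← hk, hc0, hd0, sub_zero]
    rw [hc0, hk0] at hc
    rw [hd0, hk0] at hd
    have ha : deriv (deriv F) u0 = 0 := by
      apply pow_eq_zero_iff (two_ne_zero) |>.1
      linarith
    have hb : deriv (deriv G) v0 = 0 := by
      apply pow_eq_zero_iff (two_ne_zero) |>.1
      linarith
    exact hL u0 hu0 v0 hv0 (by rw [ha, hb, add_zero])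
  · intro u hu
    rw [hk]
    exact ⟨by linarith [hce u hu], hf3 u hu⟩
  · intro v hv
    rw [hk']
    exact ⟨by linarith [hde v hv], hg3 v hv⟩
  · intro u hu v hv
    rw [eq_div_iff (hL u hu v hv), hsum u hu v hv]
    linarith [hE u hu v hv]
end

section
/- Let Σ ⊆ ℝ² be a nonempty connected open set and let ρ : Σ → (0,∞) be a smooth solution of the PDE system such that ρ_uu + ρ_vv is identically zero on Σ. Then ρ_u and ρ_v are constant on Σ with ρ_u² + ρ_v² = 1; consequently there exist φ ∈ [0, 2π) and a constant k ∈ ℝ such that ρ(u,v) = u·cos φ + v·sin φ + k for all (u,v) ∈ Σ. -/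
open Real Filter

theorem pu_eq_aux (S : Set (ℝ × ℝ)) (hS : IsOpen S) (f : ℝ → ℝ → ℝ) (H : ℝ × ℝ → ℝ)
    (hf : ∀ p ∈ S, f p.1 p.2 = H p) (hH : ∀ p ∈ S, DifferentiableAt ℝ H p) :
    ∀ p ∈ S, pu f p.1 p.2 = fderiv ℝ H p (1, 0) := by
  intro p hp
  have h1 : HasDerivAt (fun x : ℝ => ((x, p.2) : ℝ × ℝ)) (1, 0) p.1 :=
    (hasDerivAt_id p.1).prodMk (hasDerivAt_const p.1 p.2)
  have h2 : HasDerivAt (fun x : ℝ => H (x, p.2)) (fderiv ℝ H p (1, 0)) p.1 :=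
    HasFDerivAt.comp_hasDerivAt (x := p.1) (f := fun x : ℝ => ((x, p.2) : ℝ × ℝ))
      (hH p hp).hasFDerivAt h1
  have h3 : (fun x => f x p.2) =ᶠ[nhds p.1] fun x => H (x, p.2) := by
    have := h1.continuousAt.preimage_mem_nhds (hS.mem_nhds hp)
    filter_upwards [this] with x hx
    exact hf (x, p.2) hx
  exact (h2.congr_of_eventuallyEq h3).deriv

theorem pv_eq_aux (S : Set (ℝ × ℝ)) (hS : IsOpen S) (f : ℝ → ℝ → ℝ) (H : ℝ × ℝ → ℝ)
    (hf : ∀ p ∈ S, f p.1 p.2 = H p) (hH : ∀ p ∈ S, DifferentiableAt ℝ H p) :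
    ∀ p ∈ S, pv f p.1 p.2 = fderiv ℝ H p (0, 1) := by
  intro p hp
  have h1 : HasDerivAt (fun x : ℝ => ((p.1, x) : ℝ × ℝ)) (0, 1) p.2 :=
    (hasDerivAt_const p.2 p.1).prodMk (hasDerivAt_id p.2)
  have h2 : HasDerivAt (fun x : ℝ => H (p.1, x)) (fderiv ℝ H p (0, 1)) p.2 :=
    HasFDerivAt.comp_hasDerivAt (x := p.2) (f := fun x : ℝ => ((p.1, x) : ℝ × ℝ))
      (hH p hp).hasFDerivAt h1
  have h3 : (fun x => f p.1 x) =ᶠ[nhds p.2] fun x => H (p.1, x) := by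
    have := h1.continuousAt.preimage_mem_nhds (hS.mem_nhds hp)
    filter_upwards [this] with x hx
    exact hf (p.1, x) hx
  exact (h2.congr_of_eventuallyEq h3).deriv

theorem clm_ext_aux (L M : ℝ × ℝ →L[ℝ] ℝ) (h1 : L (1, 0) = M (1, 0))
    (h2 : L (0, 1) = M (0, 1)) : L = M := by
  ext
  · simpa using h1
  · simpa using h2

theorem angle_aux (a b : ℝ) (h : a ^ 2 + b ^ 2 = 1) :
    ∃ φ ∈ Set.Ico (0 : ℝ) (2 * π), Real.cos φ = a ∧ Real.sin φ = b := by
  have hn : ‖(⟨a, b⟩ : ℂ)‖ = 1 := by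
    rw [← sq_eq_sq₀ (norm_nonneg _) zero_le_one, Complex.sq_norm, Complex.normSq_mk]
    linarith
  have h0 : (⟨a, b⟩ : ℂ) ≠ 0 := by
    intro h; rw [h] at hn; simp at hn
  have hc : Real.cos (Complex.arg ⟨a, b⟩) = a := by rw [Complex.cos_arg h0, hn]; simp
  have hs : Real.sin (Complex.arg ⟨a, b⟩) = b := by rw [Complex.sin_arg, hn]; simp
  have l1 := Complex.neg_pi_lt_arg ⟨a, b⟩
  have l2 := Complex.arg_le_pi ⟨a, b⟩
  have := Real.pi_pos
  by_cases hneg : 0 ≤ Complex.arg ⟨a, b⟩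
  · exact ⟨_, ⟨hneg, by linarith⟩, hc, hs⟩
  · exact ⟨Complex.arg ⟨a, b⟩ + 2 * π, ⟨by linarith, by linarith⟩,
      by rw [Real.cos_add_two_pi, hc], by rw [Real.sin_add_two_pi, hs]⟩

/-- If ρ is a smooth positive solution of the Gauss equation and the
planar curvature line condition on a nonempty connected open set Σ ⊆ ℝ², with Δρ ≡ 0,
then ρ_u and ρ_v are constant with ρ_u² + ρ_v² = 1, and hence
ρ(u,v) = u·cos φ + v·sin φ + k for some φ ∈ [0, 2π) and k ∈ ℝ. -/
theorem harmonic_case_metric_is_linear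
    (S : Set (ℝ × ℝ)) (hS : IsOpen S) (hSc : IsConnected S)
    (ρ : ℝ → ℝ → ℝ)
    (hρ : ContDiffOn ℝ (⊤ : ℕ∞) (fun p : ℝ × ℝ => ρ p.1 p.2) S)
    (hρpos : ∀ p ∈ S, 0 < ρ p.1 p.2)
    (hGauss : ∀ p ∈ S,
      ρ p.1 p.2 * (pu (pu ρ) p.1 p.2 + pv (pv ρ) p.1 p.2)
        - ((pu ρ p.1 p.2) ^ 2 + (pv ρ p.1 p.2) ^ 2) + 1 = 0)
    (hPlanar : ∀ p ∈ S, pv (pu ρ) p.1 p.2 = 0)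
    (hLap : ∀ p ∈ S, pu (pu ρ) p.1 p.2 + pv (pv ρ) p.1 p.2 = 0) :
    (∃ a b : ℝ, a ^ 2 + b ^ 2 = 1 ∧
      ∀ p ∈ S, pu ρ p.1 p.2 = a ∧ pv ρ p.1 p.2 = b) ∧
    ∃ φ ∈ Set.Ico (0 : ℝ) (2 * π), ∃ k : ℝ,
      ∀ p ∈ S, ρ p.1 p.2 = p.1 * Real.cos φ + p.2 * Real.sin φ + k := by
  set F : ℝ × ℝ → ℝ := fun p => ρ p.1 p.2 with hF
  have hC : ∀ p ∈ S, ContDiffAt ℝ (⊤ : ℕ∞) F p := fun p hp => hρ.contDiffAt (hS.mem_nhds hp)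
  have hFd : ∀ p ∈ S, DifferentiableAt ℝ F p := fun p hp => (hC p hp).differentiableAt (by simp)
  have hC2 : ∀ p ∈ S, ContDiffAt ℝ 2 F p := fun p hp =>
    (hC p hp).of_le (WithTop.coe_le_coe.2 (le_top : (2 : ℕ∞) ≤ ⊤))
  have hGd : ∀ p ∈ S, DifferentiableAt ℝ (fderiv ℝ F) p := fun p hp =>
    ((hC2 p hp).fderiv_right (m := 1) one_add_one_eq_two.le).differentiableAt (by simp)
  have hder : ∀ w : ℝ × ℝ, ∀ p ∈ S, HasFDerivAt (fun q => fderiv ℝ F q w)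
      ((fderiv ℝ (fderiv ℝ F) p).flip w) p := by
    intro w p hp
    have := (hGd p hp).hasFDerivAt.clm_apply (hasFDerivAt_const w p)
    rwa [ContinuousLinearMap.comp_zero, zero_add] at this
  have hPu := pu_eq_aux S hS ρ F (fun _ _ => rfl) hFd
  have hPv := pv_eq_aux S hS ρ F (fun _ _ => rfl) hFd
  have hPuu := pu_eq_aux S hS (pu ρ) _ hPu (fun p hp => (hder _ p hp).differentiableAt)
  have hPuv := pv_eq_aux S hS (pu ρ) _ hPu (fun p hp => (hder _ p hp).differentiableAt)
  have hPvv := pv_eq_aux S hS (pv ρ) _ hPv (fun p hp => (hder _ p hp).differentiableAt)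
  have hnorm : ∀ p ∈ S, (fderiv ℝ F p (1, 0)) ^ 2 + (fderiv ℝ F p (0, 1)) ^ 2 = 1 := by
    intro p hp
    have h1 := hGauss p hp
    rw [hLap p hp, hPu p hp, hPv p hp] at h1
    linarith
  have hsec : ∀ p ∈ S, fderiv ℝ (fderiv ℝ F) p (1, 0) (1, 0) = 0 ∧
      fderiv ℝ (fderiv ℝ F) p (0, 1) (1, 0) = 0 ∧
      fderiv ℝ (fderiv ℝ F) p (1, 0) (0, 1) = 0 ∧
      fderiv ℝ (fderiv ℝ F) p (0, 1) (0, 1) = 0 := by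
    intro p hp
    have hsym : fderiv ℝ (fderiv ℝ F) p (1, 0) (0, 1) = fderiv ℝ (fderiv ℝ F) p (0, 1) (1, 0) :=
      ((hC2 p hp).isSymmSndFDerivAt (by simp)) _ _
    have e1 := hLap p hp
    have e2 := hPlanar p hp
    rw [hPuu p hp, hPvv p hp, (hder _ p hp).fderiv, (hder _ p hp).fderiv] at e1
    rw [hPuv p hp, (hder _ p hp).fderiv] at e2
    simp only [ContinuousLinearMap.flip_apply] at e1 e2
    have hd := ((hder (1, 0) p hp).pow 2).add ((hder (0, 1) p hp).pow 2)
    have hz : HasFDerivAt (fun _ : ℝ × ℝ => (1 : ℝ)) _ p := hd.congr_of_eventuallyEq (by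
      filter_upwards [hS.mem_nhds hp] with q hq
      simpa using (hnorm q hq).symm)
    have hz' := hz.unique (hasFDerivAt_const (1 : ℝ) p)
    have z1 := DFunLike.congr_fun hz' ((1, 0) : ℝ × ℝ)
    have z2 := DFunLike.congr_fun hz' ((0, 1) : ℝ × ℝ)
    simp at z1 z2
    have hn := hnorm p hp
    rw [hsym, e2] at z1
    rw [e2] at z2
    have hA : fderiv ℝ (fderiv ℝ F) p (1, 0) (1, 0) = 0 := by
      by_contra hne
      have hB : fderiv ℝ (fderiv ℝ F) p (0, 1) (0, 1) ≠ 0 := fun h => hne (by linarith)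
      simp [hne] at z1
      simp [hB] at z2
      rw [z1, z2] at hn
      norm_num at hn
    exact ⟨hA, e2, hsym.trans e2, by linarith⟩
  have hsec0 : ∀ p ∈ S, fderiv ℝ (fderiv ℝ F) p = 0 := by
    intro p hp
    obtain ⟨h1, h2, h3, h4⟩ := hsec p hp
    ext <;> simp [h1, h2, h3, h4]
  obtain ⟨p0, hp0⟩ := hSc.nonempty
  obtain ⟨L, hL⟩ := hS.exists_is_const_of_fderiv_eq_zero hSc.isPreconnected
    (fun p hp => (hGd p hp).differentiableWithinAt) hsec0
  have hab : L (1, 0) ^ 2 + L (0, 1) ^ 2 = 1 := by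
    have := hnorm p0 hp0
    rwa [hL p0 hp0] at this
  refine ⟨⟨L (1, 0), L (0, 1), hab, fun p hp => ⟨?_, ?_⟩⟩, ?_⟩
  · rw [hPu p hp, hL p hp]
  · rw [hPv p hp, hL p hp]
  obtain ⟨φ, hφ, hc, hs⟩ := angle_aux _ _ hab
  have hK : ∀ p ∈ S, HasFDerivAt (fun q => F q - L q) (0 : ℝ × ℝ →L[ℝ] ℝ) p := by
    intro p hp
    have := (hFd p hp).hasFDerivAt.sub L.hasFDerivAt
    rwa [hL p hp, sub_self] at this
  obtain ⟨k, hk⟩ := hS.exists_is_const_of_fderiv_eq_zero hSc.isPreconnected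
    (fun p hp => (hK p hp).differentiableAt.differentiableWithinAt) (fun p hp => (hK p hp).fderiv)
  refine ⟨φ, hφ, k, fun p hp => ?_⟩
  have h1 := hk p hp
  have h2 : L p = p.1 * L (1, 0) + p.2 * L (0, 1) := by
    have : p = p.1 • ((1, 0) : ℝ × ℝ) + p.2 • ((0, 1) : ℝ × ℝ) := by ext <;> simp
    conv_lhs => rw [this]
    rw [map_add, map_smul, map_smul, smul_eq_mul, smul_eq_mul]
  rw [hc, hs]
  simp only [hF] at h1
  linarith
end

section
/- Let c, d ∈ ℝ with c² + d² ≠ 0, and let f : ℝ → ℝ be a twice continuously differentiable function satisfying (f′)² = (d−c)f² + c and f″ = (d−c)f on all of ℝ. Then f has a zero (i.e., there exists u₀ ∈ ℝ with f(u₀) = 0) if and only if c > 0 or f is identically zero. -/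
open Real

lemma aux_const (h : ℝ → ℝ) (hh : ∀ x, HasDerivAt h 0 x) (x y : ℝ) : h x = h y :=
  is_const_of_deriv_eq_zero (fun x => (hh x).differentiableAt) (fun x => (hh x).deriv) x y

/-- exponential factor argument -/
lemma aux_exp (f g : ℝ → ℝ) (s u₀ : ℝ) (hfg : ∀ u, HasDerivAt f (g u) u)
    (hg : ∀ u, HasDerivAt g (s ^ 2 * f u) u) (h0 : f u₀ = 0) (h1 : g u₀ = 0) (u : ℝ) :
    g u - s * f u = 0 := by
  have key : ∀ x, HasDerivAt (fun x => (g x - s * f x) * exp (s * x)) 0 x := by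
    intro x
    have he : HasDerivAt (fun x => exp (s * x)) (exp (s * x) * (s * 1)) x :=
      ((hasDerivAt_id x).const_mul s).exp
    refine (((hg x).sub ((hfg x).const_mul s)).mul he).congr_deriv ?_
    simp only [Pi.sub_apply]
    ring
  have := aux_const _ key u u₀
  simp only [h0, h1, mul_zero, sub_zero, zero_mul] at this
  exact (mul_eq_zero.1 this).resolve_right (exp_pos _).ne'

lemma aux_ivt (f : ℝ → ℝ) (hf : Continuous f) (a b : ℝ) (ha : f a ≤ 0) (hb : 0 ≤ f b) :
    ∃ u, f u = 0 :=
  mem_range_of_exists_le_of_exists_ge hf ⟨a, ha⟩ ⟨b, hb⟩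

/-- slope bounded below gives a zero -/
lemma aux_slope (f g : ℝ → ℝ) (s : ℝ) (hs : 0 < s) (hfg : ∀ u, HasDerivAt f (g u) u)
    (hg : ∀ u, s ≤ g u) : ∃ u, f u = 0 := by
  have hc : Continuous f := continuous_iff_continuousAt.2 fun x => (hfg x).continuousAt
  have hd : ∀ x, HasDerivAt (fun x => f x - s * x) (g x - s * 1) x := fun x =>
    (hfg x).sub ((hasDerivAt_id x).const_mul s)
  have hm : Monotone (fun x => f x - s * x) :=
    monotone_of_deriv_nonneg (fun x => (hd x).differentiableAt) fun x => by
      rw [(hd x).deriv]; linarith [hg x]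
  have e : s * (-f 0 / s) = -f 0 := by field_simp
  rcases le_total 0 (f 0) with h | h
  · have h2 : -f 0 / s ≤ 0 := div_nonpos_of_nonpos_of_nonneg (by linarith) hs.le
    have := hm h2
    simp only [e] at this
    exact aux_ivt f hc (-f 0 / s) 0 (by linarith) h
  · have h2 : 0 ≤ -f 0 / s := div_nonneg (by linarith) hs.le
    have := hm h2
    simp only [e] at this
    exact aux_ivt f hc 0 (-f 0 / s) h (by linarith)

lemma aux_osc (f g : ℝ → ℝ) (w : ℝ) (hw : 0 < w) (hfg : ∀ u, HasDerivAt f (g u) u)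
    (hg : ∀ u, HasDerivAt g (-w ^ 2 * f u) u) : ∃ u, f u = 0 := by
  have hc : Continuous f := continuous_iff_continuousAt.2 fun x => (hfg x).continuousAt
  have key : ∀ x, HasDerivAt (fun x => g x * sin (w * x) - w * f x * cos (w * x)) 0 x := by
    intro x
    have hl : HasDerivAt (fun x => w * x) (w * 1) x := (hasDerivAt_id x).const_mul w
    refine (((hg x).mul hl.sin).sub (((hfg x).const_mul w).mul hl.cos)).congr_deriv ?_
    ring
  have := aux_const _ key (π / w) 0
  have e : w * (π / w) = π := by field_simp
  simp only [e, sin_pi, cos_pi, mul_zero, sin_zero, cos_zero] at this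
  have h2 : f (π / w) = -f 0 := by
    apply mul_left_cancel₀ hw.ne'
    linarith
  rcases le_total 0 (f 0) with h | h
  · exact aux_ivt f hc (π / w) 0 (by linarith) h
  · exact aux_ivt f hc 0 (π / w) h (by linarith)

/-- A C² solution f on ℝ of (f′)² = (d−c)f² + c, f″ = (d−c)f,
with c² + d² ≠ 0, has a zero if and only if c > 0 or f is identically zero. -/
theorem ode_solution_has_zero_iff
    (c d : ℝ) (hcd : c ^ 2 + d ^ 2 ≠ 0) (f : ℝ → ℝ)
    (hf : ContDiff ℝ 2 f)
    (hode1 : ∀ u, (deriv f u) ^ 2 = (d - c) * (f u) ^ 2 + c)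
    (hode2 : ∀ u, deriv (deriv f) u = (d - c) * f u) :
    (∃ u₀ : ℝ, f u₀ = 0) ↔ (0 < c ∨ ∀ u, f u = 0) := by
  have hfg : ∀ u, HasDerivAt f (deriv f u) u := fun u =>
    (hf.differentiable (by norm_num) u).hasDerivAt
  have hf' : ContDiff ℝ 1 (deriv f) := by
    have h : ContDiff ℝ (1 + 1) f := by simpa [one_add_one_eq_two] using hf
    exact (contDiff_succ_iff_deriv.1 h).2.2
  have hg : ∀ u, HasDerivAt (deriv f) ((d - c) * f u) u := fun u => by
    rw [← hode2 u]
    exact (hf'.differentiable (by norm_num) u).hasDerivAt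
  constructor
  · rintro ⟨u₀, h0⟩
    have h1 := hode1 u₀
    rw [h0] at h1
    have hc : 0 ≤ c := by nlinarith [sq_nonneg (deriv f u₀)]
    rcases hc.lt_or_eq with hc | hc
    · exact Or.inl hc
    right
    subst hc
    have h1 : deriv f u₀ = 0 := by
      apply pow_eq_zero_iff (two_ne_zero) |>.1
      rw [h1]; ring
    have hd : d ≠ 0 := by rintro rfl; simp at hcd
    intro u
    rcases lt_or_gt_of_ne hd with hd | hd
    · have h := hode1 u
      by_contra hne
      have : 0 < f u ^ 2 := by positivity
      nlinarith [sq_nonneg (deriv f u)]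
    · have hs : √d ^ 2 = d := sq_sqrt hd.le
      have hsp : 0 < √d := sqrt_pos.2 hd
      have a := aux_exp f (deriv f) (√d) u₀ hfg
        (fun u => by rw [hs]; simpa using hg u) h0 h1 u
      have b := aux_exp f (deriv f) (-√d) u₀ hfg
        (fun u => by rw [neg_sq, hs]; simpa using hg u) h0 h1 u
      have : √d * f u = 0 := by linarith
      exact (mul_eq_zero.1 this).resolve_left hsp.ne'
  · rintro (hc | h)
    swap
    · exact ⟨0, h 0⟩
    rcases le_or_gt 0 (d - c) with hk | hk
    · have hsp : 0 < √c := sqrt_pos.2 hc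
      have hab : ∀ u, √c ≤ |deriv f u| := fun u => by
        refine sqrt_le_iff.2 ⟨abs_nonneg _, ?_⟩
        rw [sq_abs, hode1 u]
        have := mul_nonneg hk (sq_nonneg (f u))
        linarith
      by_cases hz : ∃ v, deriv f v = 0
      · obtain ⟨v, hv⟩ := hz
        have := hab v
        rw [hv, abs_zero] at this
        linarith
      push Not at hz
      rcases lt_or_gt_of_ne (hz 0) with h0 | h0
      · have hneg : ∀ u, deriv f u < 0 := fun u => by
          by_contra hu
          obtain ⟨v, hv⟩ := aux_ivt _ hf'.continuous 0 u h0.le (not_lt.1 hu)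
          exact hz v hv
        obtain ⟨u, hu⟩ := aux_slope (fun x => -f x) (fun x => -deriv f x) (√c) hsp
          (fun u => (hfg u).neg) (fun u => by
            have := hab u
            rwa [abs_of_neg (hneg u)] at this)
        exact ⟨u, neg_eq_zero.1 hu⟩
      · have hpos : ∀ u, 0 < deriv f u := fun u => by
          by_contra hu
          obtain ⟨v, hv⟩ := aux_ivt _ hf'.continuous u 0 (not_lt.1 hu) h0.le
          exact hz v hv
        exact aux_slope f (deriv f) (√c) hsp hfg (fun u => by
            have := hab u
            rwa [abs_of_pos (hpos u)] at this)
    · refine aux_osc f (deriv f) (√(-(d - c))) (sqrt_pos.2 (by linarith)) hfg fun u => ?_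
      rw [sq_sqrt (by linarith), neg_neg]
      exact hg u
end

section
/- Let c, d ∈ ℝ with c² + d² ≠ 0, and let f, g : ℝ → ℝ be twice continuously differentiable functions satisfying the ODE system with constants c, d on all of ℝ, i.e., (f′)² = (d−c)f² + c, f″ = (d−c)f, (g′)² = (c−d)g² + d, g″ = (c−d)g. Then at least one of f and g has a zero: there exists u₀ with f(u₀) = 0, or there exists v₀ with g(v₀) = 0. -/
open Real

lemma osc_zero (k : ℝ) (hk : 0 < k) (h : ℝ → ℝ) (hh : ContDiff ℝ 2 h)
    (h2 : ∀ u, deriv (deriv h) u = -k * h u) : ∃ u, h u = 0 := by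
  have hd : Differentiable ℝ h := hh.differentiable (by norm_num)
  have hdd : Differentiable ℝ (deriv h) := by
    have h' : ContDiff ℝ (1 + 1) h := by
      have e : (1 + 1 : WithTop ℕ∞) = 2 := by norm_num
      rw [e]; exact hh
    exact (contDiff_succ_iff_deriv.mp h').2.2.differentiable (by norm_num)
  obtain ⟨w, hw, hwk⟩ : ∃ w : ℝ, 0 < w ∧ w ^ 2 = k :=
    ⟨Real.sqrt k, Real.sqrt_pos.mpr hk, Real.sq_sqrt hk.le⟩
  have hW : ∀ t, HasDerivAt
      (fun t => deriv h t * Real.sin (w * t) - w * h t * Real.cos (w * t)) 0 t := by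
    intro t
    have hl : HasDerivAt (fun t : ℝ => w * t) w t := by
      simpa using (hasDerivAt_id t).const_mul w
    have a := ((hdd t).hasDerivAt.mul hl.sin).sub
      (((hd t).hasDerivAt.const_mul w).mul hl.cos)
    refine HasDerivAt.congr_deriv a ?_
    rw [h2, ← hwk]; ring
  have hc := is_const_of_deriv_eq_zero (fun t => (hW t).differentiableAt)
    (fun t => (hW t).deriv) 0 (Real.pi / w)
  have e : w * (Real.pi / w) = Real.pi := by field_simp
  simp only [e, mul_zero, Real.sin_zero, Real.cos_zero, Real.sin_pi, Real.cos_pi] at hc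
  have hneg : h (Real.pi / w) = - h 0 := by
    apply mul_left_cancel₀ hw.ne'
    linarith
  rcases le_total (h 0) 0 with h0 | h0
  · exact mem_range_of_exists_le_of_exists_ge hd.continuous ⟨0, h0⟩
      ⟨Real.pi / w, by rw [hneg]; linarith⟩
  · exact mem_range_of_exists_le_of_exists_ge hd.continuous
      ⟨Real.pi / w, by rw [hneg]; linarith⟩ ⟨0, h0⟩

lemma lin_zero (c : ℝ) (hc : c ≠ 0) (h : ℝ → ℝ) (hh : ContDiff ℝ 2 h)
    (h1 : ∀ u, (deriv h u) ^ 2 = c)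
    (h2 : ∀ u, deriv (deriv h) u = 0) : ∃ u, h u = 0 := by
  have hd : Differentiable ℝ h := hh.differentiable (by norm_num)
  have hdd : Differentiable ℝ (deriv h) := by
    have h' : ContDiff ℝ (1 + 1) h := by
      have e : (1 + 1 : WithTop ℕ∞) = 2 := by norm_num
      rw [e]; exact hh
    exact (contDiff_succ_iff_deriv.mp h').2.2.differentiable (by norm_num)
  have hk := is_const_of_deriv_eq_zero hdd h2
  have ha : deriv h 0 ≠ 0 := by
    intro e
    apply hc
    rw [← h1 0, e]; norm_num
  have hW : ∀ t, HasDerivAt (fun t => h t - deriv h 0 * t) 0 t := by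
    intro t
    have a := (hd t).hasDerivAt.sub ((hasDerivAt_id t).const_mul (deriv h 0))
    refine HasDerivAt.congr_deriv a ?_
    rw [hk t 0]; ring
  have hx := is_const_of_deriv_eq_zero (fun t => (hW t).differentiableAt)
    (fun t => (hW t).deriv) (-h 0 / deriv h 0) 0
  refine ⟨-h 0 / deriv h 0, ?_⟩
  have e : deriv h 0 * (-h 0 / deriv h 0) = -h 0 := by field_simp
  simp only [e, mul_zero] at hx
  linarith

/-- If C² functions f, g on ℝ satisfy the ODE system
(f′)² = (d−c)f² + c, f″ = (d−c)f, (g′)² = (c−d)g² + d, g″ = (c−d)g with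
c² + d² ≠ 0, then at least one of f and g has a zero. -/
theorem at_least_one_of_f_g_has_zero
    (c d : ℝ) (hcd : c ^ 2 + d ^ 2 ≠ 0) (f g : ℝ → ℝ)
    (hf : ContDiff ℝ 2 f) (hg : ContDiff ℝ 2 g)
    (hf1 : ∀ u, (deriv f u) ^ 2 = (d - c) * (f u) ^ 2 + c)
    (hf2 : ∀ u, deriv (deriv f) u = (d - c) * f u)
    (hg1 : ∀ v, (deriv g v) ^ 2 = (c - d) * (g v) ^ 2 + d)
    (hg2 : ∀ v, deriv (deriv g) v = (c - d) * g v) :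
    (∃ u₀ : ℝ, f u₀ = 0) ∨ (∃ v₀ : ℝ, g v₀ = 0) := by
  rcases lt_trichotomy c d with h | h | h
  · right
    exact osc_zero (d - c) (by linarith) g hg (fun v => by rw [hg2]; ring)
  · left
    subst h
    refine lin_zero c ?_ f hf (fun u => by rw [hf1]; ring) (fun u => by rw [hf2]; ring)
    rintro rfl
    exact hcd (by norm_num)
  · left
    exact osc_zero (c - d) (by linarith) f hf (fun v => by rw [hf2]; ring)
end

section
/- Let Σ = I×J be a product of open intervals, ρ : Σ → (0,∞) a smooth solution of the PDE system, and X, N : Σ → ℝ³ smooth maps satisfying the Gauss–Weingarten system and the conformal frame relations. Assume in addition that there are twice continuously differentiable f : I → ℝ, g : J → ℝ and constants c, d ∈ ℝ with c² + d² ≠ 0 satisfying the ODE system, such that ρ_u(u,v) = f(u), ρ_v(u,v) = g(v), and ρ(u,v) = (f(u)² + g(v)² − 1)/(f′(u) + g′(v)) on Σ. Define the axial vector fields v₁ := ((ρ_u² − ρ·ρ_uu)/ρ²)·X_u − (ρ_u·ρ_v/ρ²)·X_v + (ρ_u/ρ)·N and v₂ := −(ρ_u·ρ_v/ρ²)·X_u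 + ((ρ_v² − ρ·ρ_vv)/ρ²)·X_v − (ρ_v/ρ)·N. Then at every point of Σ: ⟨v₁, v₁⟩ = c, ⟨v₂, v₂⟩ = d, and ⟨v₁, v₂⟩ = 0. -/
open Real Filter

theorem mink_comb (A B N : ℝ × ℝ × ℝ) (r a b e a' b' e' : ℝ)
    (h1 : mink A A = r ^ 2) (h2 : mink B B = r ^ 2) (h3 : mink A B = 0)
    (h4 : mink A N = 0) (h5 : mink B N = 0) (h6 : mink N N = -1) :
    mink (a • A + b • B + e • N) (a' • A + b' • B + e' • N)
      = (a * a' + b * b') * r ^ 2 - e * e' := by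
  simp only [mink, Prod.fst_add, Prod.snd_add, Prod.smul_fst, Prod.smul_snd, smul_eq_mul] at *
  linear_combination (a * a') * h1 + (b * b') * h2 + (a * b' + b * a') * h3
    + (a * e' + e * a') * h4 + (b * e' + e * b') * h5 + e * e' * h6

/-- For a maximal surface with planar curvature lines whose metric
function separates as ρ_u = f(u), ρ_v = g(v) with f, g solving the ODE system with
constants c, d (c² + d² ≠ 0), the axial directions satisfy ⟨v₁,v₁⟩ = c, ⟨v₂,v₂⟩ = d,
and ⟨v₁,v₂⟩ = 0 at every point. -/
theorem axial_directions_causal_character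
    (I J : Set ℝ) (hIo : IsOpen I) (hJo : IsOpen J)
    (hIc : I.OrdConnected) (hJc : J.OrdConnected)
    (ρ : ℝ → ℝ → ℝ) (X N : ℝ → ℝ → ℝ × ℝ × ℝ)
    (hρ : ContDiffOn ℝ (⊤ : ℕ∞) (fun p : ℝ × ℝ => ρ p.1 p.2) (I ×ˢ J))
    (hρpos : ∀ u ∈ I, ∀ v ∈ J, 0 < ρ u v)
    (hGauss : ∀ u ∈ I, ∀ v ∈ J,
      ρ u v * (pu (pu ρ) u v + pv (pv ρ) u v)
        - ((pu ρ u v) ^ 2 + (pv ρ u v) ^ 2) + 1 = 0)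
    (hPlanar : ∀ u ∈ I, ∀ v ∈ J, pv (pu ρ) u v = 0)
    (f g : ℝ → ℝ) (c d : ℝ) (hcd : c ^ 2 + d ^ 2 ≠ 0)
    (hfC : ContDiffOn ℝ 2 f I) (hgC : ContDiffOn ℝ 2 g J)
    (hsep : ∀ u ∈ I, ∀ v ∈ J, pu ρ u v = f u ∧ pv ρ u v = g v)
    (hode_f : ∀ u ∈ I, (deriv f u) ^ 2 = (d - c) * (f u) ^ 2 + c ∧
      deriv (deriv f) u = (d - c) * f u)
    (hode_g : ∀ v ∈ J, (deriv g v) ^ 2 = (c - d) * (g v) ^ 2 + d ∧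
      deriv (deriv g) v = (c - d) * g v)
    (hρform : ∀ u ∈ I, ∀ v ∈ J,
      ρ u v = ((f u) ^ 2 + (g v) ^ 2 - 1) / (deriv f u + deriv g v))
    (hGW1 : ∀ u ∈ I, ∀ v ∈ J, pu (pu X) u v =
      (pu ρ u v / ρ u v) • pu X u v - (pv ρ u v / ρ u v) • pv X u v + N u v)
    (hGW2 : ∀ u ∈ I, ∀ v ∈ J, pv (pv X) u v =
      -((pu ρ u v / ρ u v) • pu X u v) + (pv ρ u v / ρ u v) • pv X u v - N u v)
    (hGW3 : ∀ u ∈ I, ∀ v ∈ J, pv (pu X) u v =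
      (pv ρ u v / ρ u v) • pu X u v + (pu ρ u v / ρ u v) • pv X u v)
    (hGW4 : ∀ u ∈ I, ∀ v ∈ J, pu N u v = ((ρ u v) ^ 2)⁻¹ • pu X u v)
    (hGW5 : ∀ u ∈ I, ∀ v ∈ J, pv N u v = -(((ρ u v) ^ 2)⁻¹ • pv X u v))
    (hfr1 : ∀ u ∈ I, ∀ v ∈ J, mink (pu X u v) (pu X u v) = (ρ u v) ^ 2)
    (hfr2 : ∀ u ∈ I, ∀ v ∈ J, mink (pv X u v) (pv X u v) = (ρ u v) ^ 2)
    (hfr3 : ∀ u ∈ I, ∀ v ∈ J, mink (pu X u v) (pv X u v) = 0)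
    (hfr4 : ∀ u ∈ I, ∀ v ∈ J, mink (pu X u v) (N u v) = 0)
    (hfr5 : ∀ u ∈ I, ∀ v ∈ J, mink (pv X u v) (N u v) = 0)
    (hfr6 : ∀ u ∈ I, ∀ v ∈ J, mink (N u v) (N u v) = -1)
    (V1 V2 : ℝ → ℝ → ℝ × ℝ × ℝ)
    (hV1 : ∀ u ∈ I, ∀ v ∈ J, V1 u v =
      ((((pu ρ u v) ^ 2 - ρ u v * pu (pu ρ) u v) / (ρ u v) ^ 2) • pu X u v
        - ((pu ρ u v * pv ρ u v) / (ρ u v) ^ 2) • pv X u v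
        + (pu ρ u v / ρ u v) • N u v))
    (hV2 : ∀ u ∈ I, ∀ v ∈ J, V2 u v =
      (-(((pu ρ u v * pv ρ u v) / (ρ u v) ^ 2) • pu X u v)
        + (((pv ρ u v) ^ 2 - ρ u v * pv (pv ρ) u v) / (ρ u v) ^ 2) • pv X u v
        - (pv ρ u v / ρ u v) • N u v)) :
    ∀ u ∈ I, ∀ v ∈ J,
      mink (V1 u v) (V1 u v) = c ∧
      mink (V2 u v) (V2 u v) = d ∧
      mink (V1 u v) (V2 u v) = 0 := by
  intro u hu v hv
  have hr := hρpos u hu v hv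
  have huu : pu (pu ρ) u v = deriv f u := by
    unfold pu
    apply Filter.EventuallyEq.deriv_eq
    filter_upwards [hIo.mem_nhds hu] with x hx
    exact (hsep x hx v hv).1
  have hvv : pv (pv ρ) u v = deriv g v := by
    unfold pv
    apply Filter.EventuallyEq.deriv_eq
    filter_upwards [hJo.mem_nhds hv] with y hy
    exact (hsep u hu y hy).2
  have hG := hGauss u hu v hv
  have hform := hρform u hu v hv
  have hA := (hode_f u hu).1
  have hB := (hode_g v hv).1
  have e1 := hV1 u hu v hv
  have e2 := hV2 u hu v hv
  obtain ⟨hp, hq⟩ := hsep u hu v hv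
  rw [huu, hp, hq] at e1
  rw [hvv, hp, hq] at e2
  rw [huu, hvv, hp, hq] at hG
  have key := fun a b e a' b' e' => mink_comb _ _ _ _ a b e a' b' e' (hfr1 u hu v hv)
    (hfr2 u hu v hv) (hfr3 u hu v hv) (hfr4 u hu v hv) (hfr5 u hu v hv) (hfr6 u hu v hv)
  rw [sub_eq_add_neg, ← neg_smul] at e1
  rw [sub_eq_add_neg, ← neg_smul, ← neg_smul] at e2
  rw [e1, e2, key, key, key]
  have hab : deriv f u + deriv g v ≠ 0 := by
    intro h
    rw [h, div_zero] at hform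
    exact hr.ne' hform
  generalize ρ u v = r at *
  generalize deriv f u = a at *
  generalize deriv g v = b at *
  generalize f u = p at *
  generalize g v = q at *
  clear e1 e2 key
  have hr0 : r ≠ 0 := hr.ne'
  have hba : b - a = (c - d) * r := by
    apply mul_right_cancel₀ hab
    linear_combination hB - hA - (c - d) * hG
  refine ⟨?_, ?_, ?_⟩
  · field_simp
    linear_combination r ^ 2 * hA + r * p ^ 2 * hba - p ^ 2 * hG
  · field_simp
    linear_combination r ^ 2 * hB - r * q ^ 2 * hba - q ^ 2 * hG
  · field_simp
    linear_combination p * q * hG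
end

section
/- Let Σ = I×J, ρ : Σ → (0,∞), X, N : Σ → ℝ³, f, g, and constants c, d be as follows: ρ is a smooth solution of the PDE system; X, N satisfy the Gauss–Weingarten system and the conformal frame relations; ρ_u(u,v) = f(u), ρ_v(u,v) = g(v) with f, g satisfying the ODE system with constants c > 0 and d > 0; and ρ = (f² + g² − 1)/(f′ + g′). Suppose the constant axial vectors satisfy v₁ = √c·(1,0,0) and v₂ = −√d·(0,1,0), where v₁ := ((ρ_u² − ρ·ρ_uu)/ρ²)·X_u − (ρ_u·ρ_v/ρ²)·X_v + (ρ_u/ρ)·N and v₂ := −(ρ_u·ρ_v/ρ²)·X_u + ((ρ_v² − ρ·ρ_vv)/ρ²)·X_v − (ρ_v/ρ)·N. Writing N = (N₁, N₂, N₀), one has at every point of Σ: N₁ = −(1/√c)·(ρ_u/ρ), N₂ = −(1/√d)·(ρ_v/ρ), and N₀² = (1/c)·(ρ_u/ρ)² + (1/d)·(ρ_v/ρ)² + 1; in particular, if N₀ > 0 everywhere then N₀ = √((1/c)(ρ_u/ρ)² + (1/d)(ρ_v/ρ)² + 1). -/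
open Real Filter

/-- (Lemma on the unit normal, case c, d > 0.) If the constant axial
vectors are v₁ = √c·(1,0,0) and v₂ = −√d·(0,1,0), then the components of the unit
normal N = (N₁, N₂, N₀) satisfy N₁ = −(1/√c)ρ_u/ρ, N₂ = −(1/√d)ρ_v/ρ, and
N₀² = (1/c)(ρ_u/ρ)² + (1/d)(ρ_v/ρ)² + 1; if moreover N₀ > 0 everywhere then
N₀ = √((1/c)(ρ_u/ρ)² + (1/d)(ρ_v/ρ)² + 1). -/
theorem normal_vector_formula
    (I J : Set ℝ) (hIo : IsOpen I) (hJo : IsOpen J)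
    (hIc : I.OrdConnected) (hJc : J.OrdConnected)
    (ρ : ℝ → ℝ → ℝ) (X N : ℝ → ℝ → ℝ × ℝ × ℝ)
    (hρ : ContDiffOn ℝ (⊤ : ℕ∞) (fun p : ℝ × ℝ => ρ p.1 p.2) (I ×ˢ J))
    (hρpos : ∀ u ∈ I, ∀ v ∈ J, 0 < ρ u v)
    (hGauss : ∀ u ∈ I, ∀ v ∈ J,
      ρ u v * (pu (pu ρ) u v + pv (pv ρ) u v)
        - ((pu ρ u v) ^ 2 + (pv ρ u v) ^ 2) + 1 = 0)
    (hPlanar : ∀ u ∈ I, ∀ v ∈ J, pv (pu ρ) u v = 0)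
    (f g : ℝ → ℝ) (c d : ℝ) (hc : 0 < c) (hd : 0 < d)
    (hfC : ContDiffOn ℝ 2 f I) (hgC : ContDiffOn ℝ 2 g J)
    (hsep : ∀ u ∈ I, ∀ v ∈ J, pu ρ u v = f u ∧ pv ρ u v = g v)
    (hode_f : ∀ u ∈ I, (deriv f u) ^ 2 = (d - c) * (f u) ^ 2 + c ∧
      deriv (deriv f) u = (d - c) * f u)
    (hode_g : ∀ v ∈ J, (deriv g v) ^ 2 = (c - d) * (g v) ^ 2 + d ∧
      deriv (deriv g) v = (c - d) * g v)
    (hρform : ∀ u ∈ I, ∀ v ∈ J,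
      ρ u v = ((f u) ^ 2 + (g v) ^ 2 - 1) / (deriv f u + deriv g v))
    (hGW1 : ∀ u ∈ I, ∀ v ∈ J, pu (pu X) u v =
      (pu ρ u v / ρ u v) • pu X u v - (pv ρ u v / ρ u v) • pv X u v + N u v)
    (hGW2 : ∀ u ∈ I, ∀ v ∈ J, pv (pv X) u v =
      -((pu ρ u v / ρ u v) • pu X u v) + (pv ρ u v / ρ u v) • pv X u v - N u v)
    (hGW3 : ∀ u ∈ I, ∀ v ∈ J, pv (pu X) u v =
      (pv ρ u v / ρ u v) • pu X u v + (pu ρ u v / ρ u v) • pv X u v)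
    (hGW4 : ∀ u ∈ I, ∀ v ∈ J, pu N u v = ((ρ u v) ^ 2)⁻¹ • pu X u v)
    (hGW5 : ∀ u ∈ I, ∀ v ∈ J, pv N u v = -(((ρ u v) ^ 2)⁻¹ • pv X u v))
    (hfr1 : ∀ u ∈ I, ∀ v ∈ J, mink (pu X u v) (pu X u v) = (ρ u v) ^ 2)
    (hfr2 : ∀ u ∈ I, ∀ v ∈ J, mink (pv X u v) (pv X u v) = (ρ u v) ^ 2)
    (hfr3 : ∀ u ∈ I, ∀ v ∈ J, mink (pu X u v) (pv X u v) = 0)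
    (hfr4 : ∀ u ∈ I, ∀ v ∈ J, mink (pu X u v) (N u v) = 0)
    (hfr5 : ∀ u ∈ I, ∀ v ∈ J, mink (pv X u v) (N u v) = 0)
    (hfr6 : ∀ u ∈ I, ∀ v ∈ J, mink (N u v) (N u v) = -1)
    (hV1 : ∀ u ∈ I, ∀ v ∈ J,
      ((((pu ρ u v) ^ 2 - ρ u v * pu (pu ρ) u v) / (ρ u v) ^ 2) • pu X u v
        - ((pu ρ u v * pv ρ u v) / (ρ u v) ^ 2) • pv X u v
        + (pu ρ u v / ρ u v) • N u v)
        = (Real.sqrt c, 0, 0))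
    (hV2 : ∀ u ∈ I, ∀ v ∈ J,
      (-(((pu ρ u v * pv ρ u v) / (ρ u v) ^ 2) • pu X u v)
        + (((pv ρ u v) ^ 2 - ρ u v * pv (pv ρ) u v) / (ρ u v) ^ 2) • pv X u v
        - (pv ρ u v / ρ u v) • N u v)
        = (0, -Real.sqrt d, 0)) :
    (∀ u ∈ I, ∀ v ∈ J,
      (N u v).1 = -(1 / Real.sqrt c) * (pu ρ u v / ρ u v) ∧
      (N u v).2.1 = -(1 / Real.sqrt d) * (pv ρ u v / ρ u v) ∧
      (N u v).2.2 ^ 2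
        = (1 / c) * (pu ρ u v / ρ u v) ^ 2 + (1 / d) * (pv ρ u v / ρ u v) ^ 2 + 1) ∧
    ((∀ u ∈ I, ∀ v ∈ J, 0 < (N u v).2.2) →
      ∀ u ∈ I, ∀ v ∈ J, (N u v).2.2
        = Real.sqrt ((1 / c) * (pu ρ u v / ρ u v) ^ 2
            + (1 / d) * (pv ρ u v / ρ u v) ^ 2 + 1)) := by
  have key : ∀ u ∈ I, ∀ v ∈ J,
      (N u v).1 = -(1 / Real.sqrt c) * (pu ρ u v / ρ u v) ∧
      (N u v).2.1 = -(1 / Real.sqrt d) * (pv ρ u v / ρ u v) ∧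
      (N u v).2.2 ^ 2
        = (1 / c) * (pu ρ u v / ρ u v) ^ 2 + (1 / d) * (pv ρ u v / ρ u v) ^ 2 + 1 := by
    intro u hu v hv
    have h1 := hV1 u hu v hv
    have h2 := hV2 u hu v hv
    have h4 := hfr4 u hu v hv
    have h5 := hfr5 u hu v hv
    have h6 := hfr6 u hu v hv
    have hsc : 0 < Real.sqrt c := Real.sqrt_pos.mpr hc
    have hsd : 0 < Real.sqrt d := Real.sqrt_pos.mpr hd
    have hsc2 : Real.sqrt c ^ 2 = c := Real.sq_sqrt hc.le
    have hsd2 : Real.sqrt d ^ 2 = d := Real.sq_sqrt hd.le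
    generalize ((pu ρ u v) ^ 2 - ρ u v * pu (pu ρ) u v) / (ρ u v) ^ 2 = a at h1
    generalize ((pv ρ u v) ^ 2 - ρ u v * pv (pv ρ) u v) / (ρ u v) ^ 2 = e at h2
    generalize (pu ρ u v * pv ρ u v) / (ρ u v) ^ 2 = b at h1 h2
    generalize pu ρ u v / ρ u v = p at *
    generalize pv ρ u v / ρ u v = q at *
    generalize pu X u v = A at *
    generalize pv X u v = B at *
    generalize N u v = M at *
    obtain ⟨A1, A2, A0⟩ := A
    obtain ⟨B1, B2, B0⟩ := B
    obtain ⟨M1, M2, M0⟩ := M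
    simp only [mink] at h4 h5 h6
    simp only [Prod.smul_mk, Prod.mk_add_mk, Prod.mk_sub_mk, Prod.neg_mk, smul_eq_mul,
      Prod.mk.injEq] at h1 h2
    obtain ⟨x1, x2, x0⟩ := h1
    obtain ⟨y1, y2, y0⟩ := h2
    have e1 : Real.sqrt c * M1 = -p := by
      linear_combination (-M1) * x1 - M2 * x2 + M0 * x0 + a * h4 - b * h5 + p * h6
    have e2 : Real.sqrt d * M2 = -q := by
      linear_combination M1 * y1 + M2 * y2 - M0 * y0 + b * h4 - e * h5 + q * h6
    have n1 : M1 = -(1 / Real.sqrt c) * p := by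
      field_simp
      linarith
    have n2 : M2 = -(1 / Real.sqrt d) * q := by
      field_simp
      linarith
    refine ⟨n1, n2, ?_⟩
    have s1 : M1 ^ 2 = (1 / c) * p ^ 2 := by
      rw [n1, mul_pow, neg_sq, div_pow, hsc2, one_pow]
    have s2 : M2 ^ 2 = (1 / d) * q ^ 2 := by
      rw [n2, mul_pow, neg_sq, div_pow, hsd2, one_pow]
    show M0 ^ 2 = _
    linear_combination s1 + s2 - h6
  refine ⟨key, fun hpos u hu v hv => ?_⟩
  rw [← (key u hu v hv).2.2, Real.sqrt_sq (hpos u hu v hv).le]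
end

section
/- Fix a, b ∈ ℝ with a² + b² = 1 and define X̃ : ℝ² → ℝ³ by X̃(u,v) = (a/2)·(u − uv² + u³/3, 2uv, −u − uv² + u³/3) − (b/2)·(v + u²v − v³/3, −u² + v², −v + u²v − v³/3). Then each component of X̃ is harmonic (X̃_uu + X̃_vv = 0 on ℝ²), and X̃ is conformal with respect to the Minkowski inner product with conformal factor u²: ⟨X̃_u, X̃_u⟩ = ⟨X̃_v, X̃_v⟩ = u² and ⟨X̃_u, X̃_v⟩ = 0 at every (u,v) ∈ ℝ². (These maps are the associated family of the maximal catenoid with lightlike axis, with λ^{−2} = a + bi.) -/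
open Real Filter

/-- The associated family of the maximal catenoid with lightlike axis
(with λ⁻² = a + bi, a² + b² = 1) is harmonic and conformal with respect to the
Minkowski inner product, with conformal factor u². -/
theorem associated_family_lightlike_catenoid_harmonic_conformal
    (a b : ℝ) (hab : a ^ 2 + b ^ 2 = 1)
    (Xt : ℝ → ℝ → ℝ × ℝ × ℝ)
    (hXt : ∀ u v : ℝ, Xt u v =
      ((a / 2) * (u - u * v ^ 2 + u ^ 3 / 3) - (b / 2) * (v + u ^ 2 * v - v ^ 3 / 3),
       (a / 2) * (2 * u * v) - (b / 2) * (-u ^ 2 + v ^ 2),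
       (a / 2) * (-u - u * v ^ 2 + u ^ 3 / 3) - (b / 2) * (-v + u ^ 2 * v - v ^ 3 / 3))) :
    (∀ u v : ℝ, pu (pu Xt) u v + pv (pv Xt) u v = 0) ∧
    (∀ u v : ℝ,
      mink (pu Xt u v) (pu Xt u v) = u ^ 2 ∧
      mink (pv Xt u v) (pv Xt u v) = u ^ 2 ∧
      mink (pu Xt u v) (pv Xt u v) = 0) := by
  have hu : pu Xt = fun u v => ((a / 2) * (1 - v ^ 2 + u ^ 2) - (b / 2) * (2 * u * v),
      a * v + b * u, (a / 2) * (-1 - v ^ 2 + u ^ 2) - (b / 2) * (2 * u * v)) := by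
    funext u v
    have e : (fun x => Xt x v) = _ := funext fun x => hXt x v
    unfold pu
    rw [e]
    have h := hasDerivAt_id' u
    refine HasDerivAt.deriv (HasDerivAt.prodMk ?_ (HasDerivAt.prodMk ?_ ?_))
    · have t := (((h.sub (h.mul_const (v ^ 2))).add ((h.pow 3).div_const 3)).const_mul (a / 2)).sub
        (((((h.pow 2).mul_const v).const_add v).sub_const (v ^ 3 / 3)).const_mul (b / 2))
      refine t.congr_deriv ?_
      push_cast
      ring
    · have t := ((((h.const_mul 2).mul_const v)).const_mul (a / 2)).sub
        ((((h.pow 2).neg).add_const (v ^ 2)).const_mul (b / 2))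
      refine t.congr_deriv ?_
      push_cast
      ring
    · have t := (((h.neg.sub (h.mul_const (v ^ 2))).add ((h.pow 3).div_const 3)).const_mul (a / 2)).sub
        (((((h.pow 2).mul_const v).const_add (-v)).sub_const (v ^ 3 / 3)).const_mul (b / 2))
      refine t.congr_deriv ?_
      push_cast
      ring
  have hv : pv Xt = fun u v => (-(a * u * v) - (b / 2) * (1 + u ^ 2 - v ^ 2),
      a * u - b * v, -(a * u * v) - (b / 2) * (-1 + u ^ 2 - v ^ 2)) := by
    funext u v
    have e : (fun y => Xt u y) = _ := funext fun y => hXt u y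
    unfold pv
    rw [e]
    have h := hasDerivAt_id' v
    refine HasDerivAt.deriv (HasDerivAt.prodMk ?_ (HasDerivAt.prodMk ?_ ?_))
    · have t := (((((h.pow 2).const_mul u).const_sub u).add_const (u ^ 3 / 3)).const_mul (a / 2)).sub
        (((h.add (h.const_mul (u ^ 2))).sub ((h.pow 3).div_const 3)).const_mul (b / 2))
      refine t.congr_deriv ?_
      push_cast
      ring
    · have t := ((h.const_mul (2 * u)).const_mul (a / 2)).sub
        (((h.pow 2).const_add (-u ^ 2)).const_mul (b / 2))
      refine t.congr_deriv ?_
      push_cast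
      ring
    · have t := (((((h.pow 2).const_mul u).const_sub (-u)).add_const (u ^ 3 / 3)).const_mul (a / 2)).sub
        (((h.neg.add (h.const_mul (u ^ 2))).sub ((h.pow 3).div_const 3)).const_mul (b / 2))
      refine t.congr_deriv ?_
      push_cast
      ring
  have huu : ∀ u v, pu (pu Xt) u v = (a * u - b * v, b, a * u - b * v) := by
    intro u v
    rw [hu]
    unfold pu
    have h := hasDerivAt_id' u
    refine HasDerivAt.deriv (HasDerivAt.prodMk ?_ (HasDerivAt.prodMk ?_ ?_))
    · have t := (((h.pow 2).const_add (1 - v ^ 2)).const_mul (a / 2)).sub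
        (((h.const_mul 2).mul_const v).const_mul (b / 2))
      refine t.congr_deriv ?_
      push_cast
      ring
    · have t := (h.const_mul b).const_add (a * v)
      refine t.congr_deriv ?_
      push_cast
      ring
    · have t := (((h.pow 2).const_add (-1 - v ^ 2)).const_mul (a / 2)).sub
        (((h.const_mul 2).mul_const v).const_mul (b / 2))
      refine t.congr_deriv ?_
      push_cast
      ring
  have hvv : ∀ u v, pv (pv Xt) u v = (-(a * u) + b * v, -b, -(a * u) + b * v) := by
    intro u v
    rw [hv]
    unfold pv
    have h := hasDerivAt_id' v
    refine HasDerivAt.deriv (HasDerivAt.prodMk ?_ (HasDerivAt.prodMk ?_ ?_))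
    · have t := (h.const_mul (a * u)).neg.sub
        (((h.pow 2).const_sub (1 + u ^ 2)).const_mul (b / 2))
      refine t.congr_deriv ?_
      push_cast
      ring
    · have t := (h.const_mul b).const_sub (a * u)
      refine t.congr_deriv ?_
      push_cast
      ring
    · have t := (h.const_mul (a * u)).neg.sub
        (((h.pow 2).const_sub (-1 + u ^ 2)).const_mul (b / 2))
      refine t.congr_deriv ?_
      push_cast
      ring
  refine ⟨fun u v => ?_, fun u v => ?_⟩
  · rw [huu, hvv]
    ext <;> simp
  · rw [hu, hv]
    simp only [mink]
    refine ⟨?_, ?_, ?_⟩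
    · linear_combination u ^ 2 * hab
    · linear_combination u ^ 2 * hab
    · ring
end

section
/- Fix θ ∈ (π/4, π/2) and set A₁ = √(sin θ − cos θ), A₂ = √(cos θ) + √(sin θ), A₃ = arctan(√(tan θ − 1)). Define X^θ : ℝ² → ℝ³ by X^θ(u,v) = ( [(A₁² + A₂²)A₁u + (A₁² − A₂²)·sin(A₁u + A₃)·cosh(A₁v) + (A₂² − A₁²)·sin A₃] / (2A₁³A₂), [(A₂² − A₁²)A₁v − (A₁² + A₂²)·cos(A₁u + A₃)·sinh(A₁v)] / (2A₁³A₂), [cos(A₁u + A₃)·cosh(A₁v) − cos A₃] / A₁² ). Then: (i) each component of X^θ is harmonic (X_uu + X_vv = 0 on ℝ²); (ii) X^θ is conformal with respect to the Minkowski inner product: ⟨X_u, X_u⟩ = ⟨X_v, X_v⟩ and ⟨X_u, X_v⟩ = 0 everywhere; (iii) X^θ has planar curvature lines: det(X_u, X_uu, X_uuu) = 0 and det(X_v, X_vv, X_vvv) = 0 identically on ℝ². (These are the maximal Bonnet-type surfaces with spacelike axial direction.) -/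
open Real Filter

theorem trig_deriv (c k l m a b x : ℝ) :
    HasDerivAt (fun x => c + k * x + l * Real.sin (a * x + b) + m * Real.cos (a * x + b))
      (k + (-(m * a)) * Real.sin (a * x + b) + (l * a) * Real.cos (a * x + b)) x := by
  have h0 : HasDerivAt (fun x : ℝ => a * x + b) a x := by
    simpa using ((hasDerivAt_id x).const_mul a).add_const b
  have h := ((((hasDerivAt_id x).const_mul k).const_add c).add (h0.sin.const_mul l)).add
    (h0.cos.const_mul m)
  refine h.congr_deriv ?_
  ring

theorem hyp_deriv (c k l m a x : ℝ) :
    HasDerivAt (fun x => c + k * x + l * Real.sinh (a * x) + m * Real.cosh (a * x))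
      (k + (m * a) * Real.sinh (a * x) + (l * a) * Real.cosh (a * x)) x := by
  have h0 : HasDerivAt (fun x : ℝ => a * x) a x := by
    simpa using (hasDerivAt_id x).const_mul a
  have h := ((((hasDerivAt_id x).const_mul k).const_add c).add (h0.sinh.const_mul l)).add
    (h0.cosh.const_mul m)
  refine h.congr_deriv ?_
  ring

theorem trig_prod (f : ℝ → ℝ × ℝ × ℝ) (c k l m c2 k2 l2 m2 c3 k3 l3 m3 a b x : ℝ)
    (hf : ∀ x, f x = (c + k * x + l * Real.sin (a * x + b) + m * Real.cos (a * x + b),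
      c2 + k2 * x + l2 * Real.sin (a * x + b) + m2 * Real.cos (a * x + b),
      c3 + k3 * x + l3 * Real.sin (a * x + b) + m3 * Real.cos (a * x + b))) :
    deriv f x = (k + (-(m * a)) * Real.sin (a * x + b) + (l * a) * Real.cos (a * x + b),
      k2 + (-(m2 * a)) * Real.sin (a * x + b) + (l2 * a) * Real.cos (a * x + b),
      k3 + (-(m3 * a)) * Real.sin (a * x + b) + (l3 * a) * Real.cos (a * x + b)) := by
  rw [funext hf]
  exact ((trig_deriv c k l m a b x).prodMk
    ((trig_deriv c2 k2 l2 m2 a b x).prodMk (trig_deriv c3 k3 l3 m3 a b x))).deriv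

theorem hyp_prod (f : ℝ → ℝ × ℝ × ℝ) (c k l m c2 k2 l2 m2 c3 k3 l3 m3 a x : ℝ)
    (hf : ∀ x, f x = (c + k * x + l * Real.sinh (a * x) + m * Real.cosh (a * x),
      c2 + k2 * x + l2 * Real.sinh (a * x) + m2 * Real.cosh (a * x),
      c3 + k3 * x + l3 * Real.sinh (a * x) + m3 * Real.cosh (a * x))) :
    deriv f x = (k + (m * a) * Real.sinh (a * x) + (l * a) * Real.cosh (a * x),
      k2 + (m2 * a) * Real.sinh (a * x) + (l2 * a) * Real.cosh (a * x),
      k3 + (m3 * a) * Real.sinh (a * x) + (l3 * a) * Real.cosh (a * x)) := by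
  rw [funext hf]
  exact ((hyp_deriv c k l m a x).prodMk
    ((hyp_deriv c2 k2 l2 m2 a x).prodMk (hyp_deriv c3 k3 l3 m3 a x))).deriv

/-- For θ ∈ (π/4, π/2), the explicit map X^θ (the maximal Bonnet-type
surface with spacelike axial direction) is harmonic, conformal with respect to the
Minkowski inner product, and has planar u- and v-curvature lines. -/
theorem bonnet_spacelike_is_maximal_with_planar_curvature_lines
    (θ : ℝ) (hθ : θ ∈ Set.Ioo (π / 4) (π / 2))
    (A1 A2 A3 : ℝ)
    (hA1 : A1 = Real.sqrt (Real.sin θ - Real.cos θ))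
    (hA2 : A2 = Real.sqrt (Real.cos θ) + Real.sqrt (Real.sin θ))
    (hA3 : A3 = Real.arctan (Real.sqrt (Real.tan θ - 1)))
    (X : ℝ → ℝ → ℝ × ℝ × ℝ)
    (hX : ∀ u v : ℝ, X u v =
      (((A1 ^ 2 + A2 ^ 2) * A1 * u
          + (A1 ^ 2 - A2 ^ 2) * Real.sin (A1 * u + A3) * Real.cosh (A1 * v)
          + (A2 ^ 2 - A1 ^ 2) * Real.sin A3) / (2 * A1 ^ 3 * A2),
       ((A2 ^ 2 - A1 ^ 2) * A1 * v
          - (A1 ^ 2 + A2 ^ 2) * Real.cos (A1 * u + A3) * Real.sinh (A1 * v))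
            / (2 * A1 ^ 3 * A2),
       (Real.cos (A1 * u + A3) * Real.cosh (A1 * v) - Real.cos A3) / A1 ^ 2)) :
    (∀ u v : ℝ, pu (pu X) u v + pv (pv X) u v = 0) ∧
    (∀ u v : ℝ,
      mink (pu X u v) (pu X u v) = mink (pv X u v) (pv X u v) ∧
      mink (pu X u v) (pv X u v) = 0) ∧
    (∀ u v : ℝ,
      det3 (pu X u v) (pu (pu X) u v) (pu (pu (pu X)) u v) = 0 ∧
      det3 (pv X u v) (pv (pv X) u v) (pv (pv (pv X)) u v) = 0) := by
  have hlt : Real.cos θ < Real.sin θ := by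
    rw [← Real.sin_pi_div_two_sub]
    apply Real.sin_lt_sin_of_lt_of_le_pi_div_two <;> linarith [hθ.1, hθ.2, Real.pi_pos]
  have hc : 0 < Real.cos θ :=
    Real.cos_pos_of_mem_Ioo ⟨by linarith [hθ.1, Real.pi_pos], hθ.2⟩
  have h1 : A1 ≠ 0 := by
    rw [hA1]
    exact (Real.sqrt_pos.2 (sub_pos.2 hlt)).ne'
  have h2 : A2 ≠ 0 := by
    rw [hA2]
    exact (add_pos (Real.sqrt_pos.2 hc) (Real.sqrt_pos.2 (hc.trans hlt))).ne'
  clear hA1 hA2 hA3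
  have U1 : ∀ u v, pu X u v = (((A1 ^ 2 + A2 ^ 2) + (A1 ^ 2 - A2 ^ 2) * Real.cos (A1 * u + A3) * Real.cosh (A1 * v)) / (2 * A1 ^ 2 * A2),
      (A1 ^ 2 + A2 ^ 2) * Real.sin (A1 * u + A3) * Real.sinh (A1 * v) / (2 * A1 ^ 2 * A2), -(Real.sin (A1 * u + A3) * Real.cosh (A1 * v)) / A1) := by
    intro u v
    refine (trig_prod _ ((A2 ^ 2 - A1 ^ 2) * Real.sin A3 / (2 * A1 ^ 3 * A2)) ((A1 ^ 2 + A2 ^ 2) * A1 / (2 * A1 ^ 3 * A2))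
      ((A1 ^ 2 - A2 ^ 2) * Real.cosh (A1 * v) / (2 * A1 ^ 3 * A2)) 0 ((A2 ^ 2 - A1 ^ 2) * A1 * v / (2 * A1 ^ 3 * A2)) 0 0 (-((A1 ^ 2 + A2 ^ 2) * Real.sinh (A1 * v) / (2 * A1 ^ 3 * A2)))
      (-Real.cos A3 / A1 ^ 2) 0 0 (Real.cosh (A1 * v) / A1 ^ 2) A1 A3 u ?_).trans ?_
    · intro x
      rw [hX]
      ext <;> dsimp only <;> ring
    · ext <;> dsimp only <;> field_simp <;> ring
  have U2 : ∀ u v, pu (pu X) u v = (-((A1 ^ 2 - A2 ^ 2) * Real.sin (A1 * u + A3) * Real.cosh (A1 * v)) / (2 * A1 * A2),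
      (A1 ^ 2 + A2 ^ 2) * Real.cos (A1 * u + A3) * Real.sinh (A1 * v) / (2 * A1 * A2), -(Real.cos (A1 * u + A3) * Real.cosh (A1 * v))) := by
    intro u v
    refine (trig_prod _ ((A1 ^ 2 + A2 ^ 2) / (2 * A1 ^ 2 * A2)) 0 0 ((A1 ^ 2 - A2 ^ 2) * Real.cosh (A1 * v) / (2 * A1 ^ 2 * A2))
      0 0 ((A1 ^ 2 + A2 ^ 2) * Real.sinh (A1 * v) / (2 * A1 ^ 2 * A2)) 0
      0 0 (-(Real.cosh (A1 * v) / A1)) 0 A1 A3 u ?_).trans ?_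
    · intro x
      rw [U1]
      ext <;> dsimp only <;> ring
    · ext <;> dsimp only <;> field_simp <;> ring
  have U3 : ∀ u v, pu (pu (pu X)) u v = (-((A1 ^ 2 - A2 ^ 2) * Real.cos (A1 * u + A3) * Real.cosh (A1 * v)) / (2 * A2),
      -((A1 ^ 2 + A2 ^ 2) * Real.sin (A1 * u + A3) * Real.sinh (A1 * v)) / (2 * A2), A1 * (Real.sin (A1 * u + A3) * Real.cosh (A1 * v))) := by
    intro u v
    refine (trig_prod _ 0 0 (-((A1 ^ 2 - A2 ^ 2) * Real.cosh (A1 * v) / (2 * A1 * A2))) 0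
      0 0 0 ((A1 ^ 2 + A2 ^ 2) * Real.sinh (A1 * v) / (2 * A1 * A2))
      0 0 0 (-Real.cosh (A1 * v)) A1 A3 u ?_).trans ?_
    · intro x
      rw [U2]
      ext <;> dsimp only <;> ring
    · ext <;> dsimp only <;> field_simp <;> ring
  have V1 : ∀ u v, pv X u v = ((A1 ^ 2 - A2 ^ 2) * Real.sin (A1 * u + A3) * Real.sinh (A1 * v) / (2 * A1 ^ 2 * A2),
      ((A2 ^ 2 - A1 ^ 2) - (A1 ^ 2 + A2 ^ 2) * Real.cos (A1 * u + A3) * Real.cosh (A1 * v)) / (2 * A1 ^ 2 * A2), (Real.cos (A1 * u + A3) * Real.sinh (A1 * v)) / A1) := by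
    intro u v
    refine (hyp_prod _ (((A1 ^ 2 + A2 ^ 2) * A1 * u + (A2 ^ 2 - A1 ^ 2) * Real.sin A3) / (2 * A1 ^ 3 * A2)) 0 0
      ((A1 ^ 2 - A2 ^ 2) * Real.sin (A1 * u + A3) / (2 * A1 ^ 3 * A2)) 0 ((A2 ^ 2 - A1 ^ 2) * A1 / (2 * A1 ^ 3 * A2)) (-((A1 ^ 2 + A2 ^ 2) * Real.cos (A1 * u + A3) / (2 * A1 ^ 3 * A2))) 0
      (-Real.cos A3 / A1 ^ 2) 0 0 (Real.cos (A1 * u + A3) / A1 ^ 2) A1 v ?_).trans ?_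
    · intro x
      rw [hX]
      ext <;> dsimp only <;> ring
    · ext <;> dsimp only <;> field_simp <;> ring
  have V2 : ∀ u v, pv (pv X) u v = ((A1 ^ 2 - A2 ^ 2) * Real.sin (A1 * u + A3) * Real.cosh (A1 * v) / (2 * A1 * A2),
      -((A1 ^ 2 + A2 ^ 2) * Real.cos (A1 * u + A3) * Real.sinh (A1 * v)) / (2 * A1 * A2), Real.cos (A1 * u + A3) * Real.cosh (A1 * v)) := by
    intro u v
    refine (hyp_prod _ 0 0 ((A1 ^ 2 - A2 ^ 2) * Real.sin (A1 * u + A3) / (2 * A1 ^ 2 * A2)) 0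
      ((A2 ^ 2 - A1 ^ 2) / (2 * A1 ^ 2 * A2)) 0 0 (-((A1 ^ 2 + A2 ^ 2) * Real.cos (A1 * u + A3) / (2 * A1 ^ 2 * A2)))
      0 0 (Real.cos (A1 * u + A3) / A1) 0 A1 v ?_).trans ?_
    · intro x
      rw [V1]
      ext <;> dsimp only <;> ring
    · ext <;> dsimp only <;> field_simp <;> ring
  have V3 : ∀ u v, pv (pv (pv X)) u v = ((A1 ^ 2 - A2 ^ 2) * Real.sin (A1 * u + A3) * Real.sinh (A1 * v) / (2 * A2),
      -((A1 ^ 2 + A2 ^ 2) * Real.cos (A1 * u + A3) * Real.cosh (A1 * v)) / (2 * A2), A1 * (Real.cos (A1 * u + A3) * Real.sinh (A1 * v))) := by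
    intro u v
    refine (hyp_prod _ 0 0 0 ((A1 ^ 2 - A2 ^ 2) * Real.sin (A1 * u + A3) / (2 * A1 * A2))
      0 0 (-((A1 ^ 2 + A2 ^ 2) * Real.cos (A1 * u + A3) / (2 * A1 * A2))) 0
      0 0 0 (Real.cos (A1 * u + A3)) A1 v ?_).trans ?_
    · intro x
      rw [V2]
      ext <;> dsimp only <;> ring
    · ext <;> dsimp only <;> field_simp <;> ring
  refine ⟨fun u v => ?_, fun u v => ⟨?_, ?_⟩, fun u v => ⟨?_, ?_⟩⟩
  · rw [U2, V2]
    ext <;> simp only [Prod.fst_add, Prod.snd_add, Prod.fst_zero, Prod.snd_zero] <;> ring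
  · rw [U1, V1]
    have e1 := Real.sin_sq_add_cos_sq (A1 * u + A3)
    have e2 := Real.cosh_sq (A1 * v)
    have e3 : Real.sin (A1 * u + A3) ^ 2 = 1 - Real.cos (A1 * u + A3) ^ 2 := by linarith
    simp only [mink]
    field_simp
    ring_nf
    simp only [e2, e3]
    ring
  · rw [U1, V1]
    simp only [mink]
    field_simp
    ring
  · rw [U1, U2, U3]
    simp only [det3]
    field_simp
    ring
  · rw [V1, V2, V3]
    simp only [det3]
    field_simp
    ring
end

section
/- Fix θ ∈ (−π/2, π/4) and set B₁ = √(cos θ − sin θ), B₂ = 1 + √(1 − tan θ). Define X^θ : ℝ² → ℝ³ by X^θ(u,v) = ( e^{−B₁u}·[ (B₂(B₂(e^{2B₁u} − 1) + 2) − 2)·cos(B₁v) − 2e^{B₁u}(B₁B₂u + B₂ − 1) ] / (2B₁²B₂(B₂ − 1)), e^{−B₁u}·[ (B₂e^{2B₁u} − B₂ + 2)·sin(B₁v) − 2B₁v·e^{B₁u} ] / (2B₁²(B₂ − 1)), −[B₁B₂u + e^{−B₁u}·cos(B₁v) − 1] / (B₁²B₂) ). Then: (i) each component of X^θ is harmonic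 (X_uu + X_vv = 0 on ℝ²); (ii) X^θ is conformal with respect to the Minkowski inner product: ⟨X_u, X_u⟩ = ⟨X_v, X_v⟩ and ⟨X_u, X_v⟩ = 0 everywhere; (iii) X^θ has planar curvature lines: det(X_u, X_uu, X_uuu) = 0 and det(X_v, X_vv, X_vvv) = 0 identically on ℝ². (For θ ∈ (0, π/4) these are maximal Bonnet-type surfaces with spacelike axial direction, for θ = 0 with lightlike axial direction, and for θ ∈ (−π/2, 0) with timelike axial direction.) -/
open Real Filter

/-- Derivative of the building block in the first variable. -/
theorem hasDeriv_u (b a1 a2 a3 a4 u : ℝ) :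
    HasDerivAt (fun x => a1 * exp (b * x) + a2 * exp (-(b * x)) + a3 * x + a4)
      (b * a1 * exp (b * u) + -b * a2 * exp (-(b * u)) + a3) u := by
  have h1 : HasDerivAt (fun x : ℝ => b * x) b u := by
    simpa using (hasDerivAt_id u).const_mul b
  have h := (((h1.exp.const_mul a1).add (h1.neg.exp.const_mul a2)).add
    ((hasDerivAt_id u).const_mul a3)).add_const a4
  refine h.congr_deriv ?_
  simp only [Pi.neg_apply]
  ring

/-- Derivative of the building block in the second variable. -/
theorem hasDeriv_v (b a1 a2 a3 a4 v : ℝ) :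
    HasDerivAt (fun y => a1 * cos (b * y) + a2 * sin (b * y) + a3 * y + a4)
      (b * a2 * cos (b * v) + -b * a1 * sin (b * v) + a3) v := by
  have h1 : HasDerivAt (fun x : ℝ => b * x) b v := by
    simpa using (hasDerivAt_id v).const_mul b
  have h := (((h1.cos.const_mul a1).add (h1.sin.const_mul a2)).add
    ((hasDerivAt_id v).const_mul a3)).add_const a4
  refine h.congr_deriv ?_
  ring

/-- Componentwise computation of `pu` from explicit coefficients. -/
theorem pu_eq (b : ℝ) (F : ℝ → ℝ → ℝ × ℝ × ℝ) (p q r : ℝ → ℝ × ℝ × ℝ × ℝ)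
    (h : ∀ u v, F u v =
      ((p v).1 * exp (b * u) + (p v).2.1 * exp (-(b * u)) + (p v).2.2.1 * u + (p v).2.2.2,
       (q v).1 * exp (b * u) + (q v).2.1 * exp (-(b * u)) + (q v).2.2.1 * u + (q v).2.2.2,
       (r v).1 * exp (b * u) + (r v).2.1 * exp (-(b * u)) + (r v).2.2.1 * u + (r v).2.2.2))
    (u v : ℝ) : pu F u v =
      (b * (p v).1 * exp (b * u) + -b * (p v).2.1 * exp (-(b * u)) + (p v).2.2.1,
       b * (q v).1 * exp (b * u) + -b * (q v).2.1 * exp (-(b * u)) + (q v).2.2.1,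
       b * (r v).1 * exp (b * u) + -b * (r v).2.1 * exp (-(b * u)) + (r v).2.2.1) := by
  unfold pu
  simp only [h]
  exact ((hasDeriv_u b _ _ _ _ u).prodMk
    ((hasDeriv_u b _ _ _ _ u).prodMk (hasDeriv_u b _ _ _ _ u))).deriv

/-- Componentwise computation of `pv` from explicit coefficients. -/
theorem pv_eq (b : ℝ) (F : ℝ → ℝ → ℝ × ℝ × ℝ) (p q r : ℝ → ℝ × ℝ × ℝ × ℝ)
    (h : ∀ u v, F u v =
      ((p u).1 * cos (b * v) + (p u).2.1 * sin (b * v) + (p u).2.2.1 * v + (p u).2.2.2,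
       (q u).1 * cos (b * v) + (q u).2.1 * sin (b * v) + (q u).2.2.1 * v + (q u).2.2.2,
       (r u).1 * cos (b * v) + (r u).2.1 * sin (b * v) + (r u).2.2.1 * v + (r u).2.2.2))
    (u v : ℝ) : pv F u v =
      (b * (p u).2.1 * cos (b * v) + -b * (p u).1 * sin (b * v) + (p u).2.2.1,
       b * (q u).2.1 * cos (b * v) + -b * (q u).1 * sin (b * v) + (q u).2.2.1,
       b * (r u).2.1 * cos (b * v) + -b * (r u).1 * sin (b * v) + (r u).2.2.1) := by
  unfold pv
  simp only [h]
  exact ((hasDeriv_v b _ _ _ _ v).prodMk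
    ((hasDeriv_v b _ _ _ _ v).prodMk (hasDeriv_v b _ _ _ _ v))).deriv

/-- For θ ∈ (−π/2, π/4), the explicit map X^θ (maximal Bonnet-type
surface with spacelike, lightlike, or timelike axial direction) is harmonic, conformal
with respect to the Minkowski inner product, and has planar u- and v-curvature lines. -/
theorem bonnet_family_is_maximal_with_planar_curvature_lines
    (θ : ℝ) (hθ : θ ∈ Set.Ioo (-(π / 2)) (π / 4))
    (B1 B2 : ℝ)
    (hB1 : B1 = Real.sqrt (Real.cos θ - Real.sin θ))
    (hB2 : B2 = 1 + Real.sqrt (1 - Real.tan θ))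
    (X : ℝ → ℝ → ℝ × ℝ × ℝ)
    (hX : ∀ u v : ℝ, X u v =
      (Real.exp (-(B1 * u)) *
          ((B2 * (B2 * (Real.exp (2 * B1 * u) - 1) + 2) - 2) * Real.cos (B1 * v)
            - 2 * Real.exp (B1 * u) * (B1 * B2 * u + B2 - 1))
          / (2 * B1 ^ 2 * B2 * (B2 - 1)),
       Real.exp (-(B1 * u)) *
          ((B2 * Real.exp (2 * B1 * u) - B2 + 2) * Real.sin (B1 * v)
            - 2 * B1 * v * Real.exp (B1 * u))
          / (2 * B1 ^ 2 * (B2 - 1)),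
       -((B1 * B2 * u + Real.exp (-(B1 * u)) * Real.cos (B1 * v) - 1)
          / (B1 ^ 2 * B2)))) :
    (∀ u v : ℝ, pu (pu X) u v + pv (pv X) u v = 0) ∧
    (∀ u v : ℝ,
      mink (pu X u v) (pu X u v) = mink (pv X u v) (pv X u v) ∧
      mink (pu X u v) (pv X u v) = 0) ∧
    (∀ u v : ℝ,
      det3 (pu X u v) (pu (pu X) u v) (pu (pu (pu X)) u v) = 0 ∧
      det3 (pv X u v) (pv (pv X) u v) (pv (pv (pv X)) u v) = 0) := by
  have hpi := Real.pi_pos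
  have hc : 0 < cos θ := cos_pos_of_mem_Ioo ⟨by linarith [hθ.1], by linarith [hθ.2]⟩
  have ht : tan θ < 1 := by
    rw [← tan_pi_div_four]
    exact tan_lt_tan_of_lt_of_lt_pi_div_two hθ.1 (by linarith) hθ.2
  have hs : sin θ < cos θ := by
    rw [tan_eq_sin_div_cos, div_lt_one hc] at ht
    exact ht
  have hb0 : B1 ≠ 0 := by
    rw [hB1]; exact (Real.sqrt_pos.2 (by linarith)).ne'
  have hc1 : 1 < B2 := by
    rw [hB2]; linarith [Real.sqrt_pos.2 (show 0 < 1 - tan θ by linarith)]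
  clear hB1 hB2
  have hc0 : B2 ≠ 0 := by linarith
  have hc2 : B2 - 1 ≠ 0 := by linarith
  obtain ⟨k, hk⟩ : ∃ k, k = 1 / (2 * B1 ^ 2 * B2 * (B2 - 1)) := ⟨_, rfl⟩
  generalize hcc : B2 = c at *
  generalize hbb : B1 = b at *
  have hEe : ∀ u, exp (b * u) * exp (-(b * u)) = 1 := fun u => by
    rw [← exp_add]; simp
  have hX' : ∀ u v, X u v =
      (k * ((c ^ 2 * exp (b * u) - (c ^ 2 - 2 * c + 2) * exp (-(b * u))) * cos (b * v)
          - 2 * b * c * u - 2 * (c - 1)),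
       k * ((c ^ 2 * exp (b * u) - (c ^ 2 - 2 * c) * exp (-(b * u))) * sin (b * v)
          - 2 * b * c * v),
       k * (-(2 * (c - 1)) * (b * c * u + exp (-(b * u)) * cos (b * v) - 1))) := by
    intro u v
    have h2 : exp (2 * b * u) = exp (b * u) * exp (b * u) := by
      rw [← exp_add]; ring_nf
    have h3 := hEe u
    rw [hX, h2, hk]
    generalize exp (b * u) = E at *
    generalize exp (-(b * u)) = e at *
    refine Prod.ext ?_ (Prod.ext ?_ ?_)
    · simp only
      field_simp
      linear_combination (c ^ 2 * E * cos (b * v) - 2 * (b * c * u + c - 1)) * h3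
    · simp only
      field_simp
      linear_combination (c * E * sin (b * v) - 2 * b * v) * h3
    · simp only
      field_simp
  clear hX
  have hu1 : ∀ u v, pu X u v =
      (k * b * ((c ^ 2 * exp (b * u) + (c ^ 2 - 2 * c + 2) * exp (-(b * u))) * cos (b * v)
          - 2 * c),
       k * b * ((c ^ 2 * exp (b * u) + (c ^ 2 - 2 * c) * exp (-(b * u))) * sin (b * v)),
       k * b * (-(2 * (c - 1)) * (c - exp (-(b * u)) * cos (b * v)))) := by
    intro u v
    rw [pu_eq b X
      (fun v => (k * c ^ 2 * cos (b * v), -k * (c ^ 2 - 2 * c + 2) * cos (b * v),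
        -2 * k * b * c, -2 * k * (c - 1)))
      (fun v => (k * c ^ 2 * sin (b * v), -k * (c ^ 2 - 2 * c) * sin (b * v),
        0, - 2 * k * b * c * v))
      (fun v => (0, -2 * k * (c - 1) * cos (b * v), -2 * k * (c - 1) * b * c, 2 * k * (c - 1)))
      (by intro u v; rw [hX']; refine Prod.ext ?_ (Prod.ext ?_ ?_) <;> simp only <;> ring)]
    refine Prod.ext ?_ (Prod.ext ?_ ?_) <;> simp only <;> ring
  have hu2 : ∀ u v, pu (pu X) u v =
      (k * b ^ 2 * ((c ^ 2 * exp (b * u) - (c ^ 2 - 2 * c + 2) * exp (-(b * u))) * cos (b * v)),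
       k * b ^ 2 * ((c ^ 2 * exp (b * u) - (c ^ 2 - 2 * c) * exp (-(b * u))) * sin (b * v)),
       k * b ^ 2 * (-(2 * (c - 1)) * (exp (-(b * u)) * cos (b * v)))) := by
    intro u v
    rw [pu_eq b (pu X)
      (fun v => (k * b * c ^ 2 * cos (b * v), k * b * (c ^ 2 - 2 * c + 2) * cos (b * v),
        0, -2 * k * b * c))
      (fun v => (k * b * c ^ 2 * sin (b * v), k * b * (c ^ 2 - 2 * c) * sin (b * v), 0, 0))
      (fun v => (0, 2 * k * b * (c - 1) * cos (b * v), 0, -2 * k * b * (c - 1) * c))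
      (by intro u v; rw [hu1]; refine Prod.ext ?_ (Prod.ext ?_ ?_) <;> simp only <;> ring)]
    refine Prod.ext ?_ (Prod.ext ?_ ?_) <;> simp only <;> ring
  have hu3 : ∀ u v, pu (pu (pu X)) u v =
      (k * b ^ 3 * ((c ^ 2 * exp (b * u) + (c ^ 2 - 2 * c + 2) * exp (-(b * u))) * cos (b * v)),
       k * b ^ 3 * ((c ^ 2 * exp (b * u) + (c ^ 2 - 2 * c) * exp (-(b * u))) * sin (b * v)),
       k * b ^ 3 * ((2 * (c - 1)) * (exp (-(b * u)) * cos (b * v)))) := by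
    intro u v
    rw [pu_eq b (pu (pu X))
      (fun v => (k * b ^ 2 * c ^ 2 * cos (b * v),
        -k * b ^ 2 * (c ^ 2 - 2 * c + 2) * cos (b * v), 0, 0))
      (fun v => (k * b ^ 2 * c ^ 2 * sin (b * v),
        -k * b ^ 2 * (c ^ 2 - 2 * c) * sin (b * v), 0, 0))
      (fun v => (0, -2 * k * b ^ 2 * (c - 1) * cos (b * v), 0, 0))
      (by intro u v; rw [hu2]; refine Prod.ext ?_ (Prod.ext ?_ ?_) <;> simp only <;> ring)]
    refine Prod.ext ?_ (Prod.ext ?_ ?_) <;> simp only <;> ring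
  have hv1 : ∀ u v, pv X u v =
      (k * b * (-(c ^ 2 * exp (b * u) - (c ^ 2 - 2 * c + 2) * exp (-(b * u))) * sin (b * v)),
       k * b * ((c ^ 2 * exp (b * u) - (c ^ 2 - 2 * c) * exp (-(b * u))) * cos (b * v) - 2 * c),
       k * b * ((2 * (c - 1)) * (exp (-(b * u)) * sin (b * v)))) := by
    intro u v
    rw [pv_eq b X
      (fun u => (k * (c ^ 2 * exp (b * u) - (c ^ 2 - 2 * c + 2) * exp (-(b * u))), 0, 0,
        k * (-2 * b * c * u - 2 * (c - 1))))
      (fun u => (0, k * (c ^ 2 * exp (b * u) - (c ^ 2 - 2 * c) * exp (-(b * u))),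
        -2 * k * b * c, 0))
      (fun u => (-2 * k * (c - 1) * exp (-(b * u)), 0, 0, -2 * k * (c - 1) * (b * c * u - 1)))
      (by intro u v; rw [hX']; refine Prod.ext ?_ (Prod.ext ?_ ?_) <;> simp only <;> ring)]
    refine Prod.ext ?_ (Prod.ext ?_ ?_) <;> simp only <;> ring
  have hv2 : ∀ u v, pv (pv X) u v =
      (k * b ^ 2 * (-(c ^ 2 * exp (b * u) - (c ^ 2 - 2 * c + 2) * exp (-(b * u))) * cos (b * v)),
       k * b ^ 2 * (-(c ^ 2 * exp (b * u) - (c ^ 2 - 2 * c) * exp (-(b * u))) * sin (b * v)),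
       k * b ^ 2 * ((2 * (c - 1)) * (exp (-(b * u)) * cos (b * v)))) := by
    intro u v
    rw [pv_eq b (pv X)
      (fun u => (0, -k * b * (c ^ 2 * exp (b * u) - (c ^ 2 - 2 * c + 2) * exp (-(b * u))), 0, 0))
      (fun u => (k * b * (c ^ 2 * exp (b * u) - (c ^ 2 - 2 * c) * exp (-(b * u))), 0, 0,
        -2 * k * b * c))
      (fun u => (0, 2 * k * b * (c - 1) * exp (-(b * u)), 0, 0))
      (by intro u v; rw [hv1]; refine Prod.ext ?_ (Prod.ext ?_ ?_) <;> simp only <;> ring)]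
    refine Prod.ext ?_ (Prod.ext ?_ ?_) <;> simp only <;> ring
  have hv3 : ∀ u v, pv (pv (pv X)) u v =
      (k * b ^ 3 * ((c ^ 2 * exp (b * u) - (c ^ 2 - 2 * c + 2) * exp (-(b * u))) * sin (b * v)),
       k * b ^ 3 * (-(c ^ 2 * exp (b * u) - (c ^ 2 - 2 * c) * exp (-(b * u))) * cos (b * v)),
       k * b ^ 3 * (-(2 * (c - 1)) * (exp (-(b * u)) * sin (b * v)))) := by
    intro u v
    rw [pv_eq b (pv (pv X))
      (fun u => (-k * b ^ 2 * (c ^ 2 * exp (b * u) - (c ^ 2 - 2 * c + 2) * exp (-(b * u))),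
        0, 0, 0))
      (fun u => (0, -k * b ^ 2 * (c ^ 2 * exp (b * u) - (c ^ 2 - 2 * c) * exp (-(b * u))), 0, 0))
      (fun u => (2 * k * b ^ 2 * (c - 1) * exp (-(b * u)), 0, 0, 0))
      (by intro u v; rw [hv2]; refine Prod.ext ?_ (Prod.ext ?_ ?_) <;> simp only <;> ring)]
    refine Prod.ext ?_ (Prod.ext ?_ ?_) <;> simp only <;> ring
  refine ⟨fun u v => ?_, fun u v => ⟨?_, ?_⟩, fun u v => ⟨?_, ?_⟩⟩
  · rw [hu2, hv2]
    refine Prod.ext ?_ (Prod.ext ?_ ?_) <;>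
      simp only [Prod.fst_add, Prod.snd_add, Prod.fst_zero, Prod.snd_zero] <;> ring
  · rw [hu1, hv1]
    simp only [mink]
    have h1 := hEe u
    have h2 := sin_sq_add_cos_sq (b * v)
    linear_combination (4 * k ^ 2 * b ^ 2 * (c - 1) ^ 2 * c ^ 2) *
      (exp (b * u) * exp (-(b * u)) * h2 + h1)
  · rw [hu1, hv1]
    simp only [mink]
    ring
  · rw [hu1, hu2, hu3]
    simp only [det3]
    ring
  · rw [hv1, hv2, hv3]
    simp only [det3]
    ring
end

section
/- For θ ∈ (π/4, π/2) let X^θ be the map defined with A₁ = √(sin θ − cos θ), A₂ = √(cos θ) + √(sin θ), A₃ = arctan(√(tan θ − 1)) by X^θ(u,v) = ( [(A₁² + A₂²)A₁u + (A₁² − A₂²)sin(A₁u + A₃)cosh(A₁v) + (A₂² − A₁²)sin A₃]/(2A₁³A₂), [(A₂² − A₁²)A₁v − (A₁² + A₂²)cos(A₁u + A₃)sinh(A₁v)]/(2A₁³A₂), [cos(A₁u + A₃)cosh(A₁v) − cos A₃]/A₁² ); for θ ∈ (−π/2, π/4) let X^θ be the map defined with B₁ = √(cos θ − sin θ), B₂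 = 1 + √(1 − tan θ) by X^θ(u,v) = ( e^{−B₁u}[(B₂(B₂(e^{2B₁u} − 1) + 2) − 2)cos(B₁v) − 2e^{B₁u}(B₁B₂u + B₂ − 1)]/(2B₁²B₂(B₂ − 1)), e^{−B₁u}[(B₂e^{2B₁u} − B₂ + 2)sin(B₁v) − 2B₁v e^{B₁u}]/(2B₁²(B₂ − 1)), −[B₁B₂u + e^{−B₁u}cos(B₁v) − 1]/(B₁²B₂) ). Then for every fixed (u,v) ∈ ℝ², both one-sided limits as θ → π/4 exist and lim_{θ→(π/4)⁺} X^θ(u,v) = lim_{θ→(π/4)⁻} X^θ(u,v) = (1/√2)·( û − û·v̂² + û³/3 − 4/3, −v̂ + û²·v̂ − v̂³/3, −û² + v̂² + 1 ), where û = 2^{−1/4}u + 1 and v̂ = 2^{−1/4}v. (Thus the family X^θ is continuous in θ at θ = π/4, where it equals the maximal Enneper-type surface.) -/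
open Real Filter Topology

/-- The parametrization X^θ for θ ∈ (π/4, π/2) (spacelike-axial Bonnet-type branch). -/
noncomputable def XA (θ u v : ℝ) : ℝ × ℝ × ℝ :=
  let A1 := Real.sqrt (Real.sin θ - Real.cos θ)
  let A2 := Real.sqrt (Real.cos θ) + Real.sqrt (Real.sin θ)
  let A3 := Real.arctan (Real.sqrt (Real.tan θ - 1))
  (((A1 ^ 2 + A2 ^ 2) * A1 * u
      + (A1 ^ 2 - A2 ^ 2) * Real.sin (A1 * u + A3) * Real.cosh (A1 * v)
      + (A2 ^ 2 - A1 ^ 2) * Real.sin A3) / (2 * A1 ^ 3 * A2),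
   ((A2 ^ 2 - A1 ^ 2) * A1 * v
      - (A1 ^ 2 + A2 ^ 2) * Real.cos (A1 * u + A3) * Real.sinh (A1 * v))
        / (2 * A1 ^ 3 * A2),
   (Real.cos (A1 * u + A3) * Real.cosh (A1 * v) - Real.cos A3) / A1 ^ 2)

/-- The parametrization X^θ for θ ∈ (−π/2, π/4) (the other Bonnet-type branch). -/
noncomputable def XB (θ u v : ℝ) : ℝ × ℝ × ℝ :=
  let B1 := Real.sqrt (Real.cos θ - Real.sin θ)
  let B2 := 1 + Real.sqrt (1 - Real.tan θ)
  (Real.exp (-(B1 * u)) *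
      ((B2 * (B2 * (Real.exp (2 * B1 * u) - 1) + 2) - 2) * Real.cos (B1 * v)
        - 2 * Real.exp (B1 * u) * (B1 * B2 * u + B2 - 1))
      / (2 * B1 ^ 2 * B2 * (B2 - 1)),
   Real.exp (-(B1 * u)) *
      ((B2 * Real.exp (2 * B1 * u) - B2 + 2) * Real.sin (B1 * v)
        - 2 * B1 * v * Real.exp (B1 * u))
      / (2 * B1 ^ 2 * (B2 - 1)),
   -((B1 * B2 * u + Real.exp (-(B1 * u)) * Real.cos (B1 * v) - 1)
      / (B1 ^ 2 * B2)))

/-- The maximal Enneper-type surface, in the coordinates û = 2^{-1/4}u + 1,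
v̂ = 2^{-1/4}v. -/
noncomputable def EnneperMax (u v : ℝ) : ℝ × ℝ × ℝ :=
  let uh := (2 : ℝ) ^ (-(1 : ℝ) / 4) * u + 1
  let vh := (2 : ℝ) ^ (-(1 : ℝ) / 4) * v
  ((1 / Real.sqrt 2) * (uh - uh * vh ^ 2 + uh ^ 3 / 3 - 4 / 3),
   (1 / Real.sqrt 2) * (-vh + uh ^ 2 * vh - vh ^ 3 / 3),
   (1 / Real.sqrt 2) * (-uh ^ 2 + vh ^ 2 + 1))

lemma aux_div (f : ℝ → ℝ) (c K : ℝ) (n : ℕ) (hn : n ≠ 0)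
    (h : ∀ x, |x| ≤ 1 → |f x - c * x ^ n| ≤ K * |x| ^ (n + 1)) :
    ∃ S : ℝ → ℝ, (∀ x, f x = x ^ n * S x) ∧ Tendsto S (𝓝 0) (𝓝 c) := by
  classical
  refine ⟨fun x => if x = 0 then c else f x / x ^ n, ?_, ?_⟩
  · intro x
    by_cases hx : x = 0
    · subst hx
      have h0 := h 0 (by simp)
      simp [hn] at h0
      simp [h0, hn]
    · simp only [hx, if_false]
      field_simp
  · rw [tendsto_iff_norm_sub_tendsto_zero]
    have hK : Tendsto (fun x : ℝ => K * |x|) (𝓝 0) (𝓝 0) := by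
      have : Continuous fun x : ℝ => K * |x| := by fun_prop
      simpa using this.tendsto 0
    refine squeeze_zero' (Eventually.of_forall fun x => norm_nonneg _) ?_ hK
    have h1 : ∀ᶠ x : ℝ in 𝓝 0, |x| < 1 := by
      have : Continuous fun x : ℝ => |x| := by fun_prop
      exact (this.tendsto 0).eventually (gt_mem_nhds (by simp))
    filter_upwards [h1] with x hx1
    by_cases hx : x = 0
    · subst hx; simp
    · simp only [hx, if_false, Real.norm_eq_abs]
      have hp : 0 < |x| ^ n := pow_pos (abs_pos.mpr hx) n
      have : f x / x ^ n - c = (f x - c * x ^ n) / x ^ n := by field_simp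
      rw [this, abs_div, abs_pow, div_le_iff₀ hp]
      calc _ ≤ _ := h x hx1.le
        _ = _ := by ring

lemma aux_sin : ∃ S : ℝ → ℝ, (∀ x, sin x = x - x ^ 3 * S x) ∧ Tendsto S (𝓝 0) (𝓝 (1/6)) := by
  obtain ⟨S, h1, h2⟩ := aux_div (fun x => x - sin x) (1/6) (5/96) 3 (by norm_num) (by
    intro x hx
    have := Real.sin_bound hx
    rw [← abs_neg]
    refine le_trans (le_of_eq ?_) (this.trans ?_)
    · congr 1; ring
    · have h5 : |x| ^ 5 ≤ |x| ^ 4 := pow_le_pow_of_le_one (abs_nonneg x) hx (by norm_num)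
      have h4 : 0 ≤ |x| ^ 4 := by positivity
      norm_num
      nlinarith)
  exact ⟨S, fun x => by linarith [h1 x], h2⟩

lemma aux_cos : ∃ S : ℝ → ℝ, (∀ x, cos x = 1 - x ^ 2 * S x) ∧ Tendsto S (𝓝 0) (𝓝 (1/2)) := by
  obtain ⟨S, h1, h2⟩ := aux_div (fun x => 1 - cos x) (1/2) (5/96) 2 (by norm_num) (by
    intro x hx
    have := Real.cos_bound hx
    rw [← abs_neg]
    refine le_trans (le_of_eq ?_) (this.trans ?_)
    · congr 1; ring
    · have h5 : |x| ^ 4 ≤ |x| ^ 3 := pow_le_pow_of_le_one (abs_nonneg x) hx (by norm_num)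
      norm_num
      nlinarith)
  exact ⟨S, fun x => by linarith [h1 x], h2⟩

lemma aux_exp3 : ∃ S : ℝ → ℝ, (∀ x, exp x = 1 + x + x ^ 2 / 2 + x ^ 3 * S x) ∧
    Tendsto S (𝓝 0) (𝓝 (1/6)) := by
  obtain ⟨S, h1, h2⟩ := aux_div (fun x => exp x - 1 - x - x ^ 2 / 2) (1/6) (5/96) 3
    (by norm_num) (by
    intro x hx
    have := Real.exp_bound hx (n := 4) (by norm_num)
    refine le_trans (le_of_eq ?_) (this.trans (le_of_eq ?_))
    · congr 1; simp [Finset.sum_range_succ, Nat.factorial]; ring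
    · norm_num [Nat.factorial]; ring)
  exact ⟨S, fun x => by linarith [h1 x], h2⟩

lemma neg_zero_tendsto {E : ℝ → ℝ} {c : ℝ} (h : Tendsto E (𝓝 0) (𝓝 c)) :
    Tendsto (fun x => E (-x)) (𝓝 0) (𝓝 c) := by
  refine h.comp ?_
  simpa using (continuous_neg (G := ℝ)).tendsto 0

lemma aux_exp_s15 : ∃ S : ℝ → ℝ, (∀ x, exp x = 1 + x + x ^ 2 * S x) ∧
    Tendsto S (𝓝 0) (𝓝 (1/2)) := by
  obtain ⟨E, h1, h2⟩ := aux_exp3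
  refine ⟨fun x => 1/2 + x * E x, fun x => by rw [h1]; ring, ?_⟩
  simpa using tendsto_const_nhds.add (tendsto_id.mul h2)

lemma aux_sinh : ∃ S : ℝ → ℝ, (∀ x, sinh x = x + x ^ 3 * S x) ∧
    Tendsto S (𝓝 0) (𝓝 (1/6)) := by
  obtain ⟨E, h1, h2⟩ := aux_exp3
  refine ⟨fun x => (E x + E (-x)) / 2, fun x => by rw [sinh_eq, h1, h1]; ring, ?_⟩
  convert (h2.add (neg_zero_tendsto h2)).div_const 2 using 2
  norm_num

lemma aux_cosh : ∃ S : ℝ → ℝ, (∀ x, cosh x = 1 + x ^ 2 * S x) ∧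
    Tendsto S (𝓝 0) (𝓝 (1/2)) := by
  obtain ⟨E, h1, h2⟩ := aux_exp3
  refine ⟨fun x => 1/2 + x * ((E x - E (-x)) / 2),
    fun x => by rw [cosh_eq, h1, h1]; ring, ?_⟩
  convert (tendsto_const_nhds (x := (1/2 : ℝ))).add
    (tendsto_id.mul ((h2.sub (neg_zero_tendsto h2)).div_const 2)) using 2
  all_goals norm_num

lemma aux_arctan : ∃ S : ℝ → ℝ, (∀ x, arctan x = x * S x) ∧
    Tendsto S (𝓝 0) (𝓝 1) := by
  refine ⟨dslope arctan 0, fun x => ?_, ?_⟩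
  · have := sub_smul_dslope arctan 0 x
    simpa using this.symm
  · have h : ContinuousAt (dslope arctan 0) 0 :=
      continuousAt_dslope_same.mpr (Real.differentiableAt_arctan 0)
    have := h.tendsto
    simpa [dslope_same] using this

lemma branchA {l : Filter ℝ} {a w A : ℝ → ℝ} (q u v : ℝ) (hq : q ≠ 0) (hq4 : q ^ 4 = 1 / 2)
    (ha : Tendsto a l (𝓝 0)) (ha0 : ∀ᶠ t in l, a t ≠ 0)
    (hw : Tendsto w l (𝓝 q⁻¹)) (hA : Tendsto A l (𝓝 (2 * q))) :
    Tendsto (fun t =>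
      ((((a t) ^ 2 + (A t) ^ 2) * a t * u
      + ((a t) ^ 2 - (A t) ^ 2) * sin (a t * u + a t * w t) * cosh (a t * v)
      + ((A t) ^ 2 - (a t) ^ 2) * sin (a t * w t)) / (2 * (a t) ^ 3 * A t),
   (((A t) ^ 2 - (a t) ^ 2) * a t * v
      - ((a t) ^ 2 + (A t) ^ 2) * cos (a t * u + a t * w t) * sinh (a t * v))
        / (2 * (a t) ^ 3 * A t),
   (cos (a t * u + a t * w t) * cosh (a t * v) - cos (a t * w t)) / (a t) ^ 2)) l
    (𝓝 (q ^ 2 * ((q * u + 1) - (q * u + 1) * (q * v) ^ 2 + (q * u + 1) ^ 3 / 3 - 4 / 3),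
       q ^ 2 * (-(q * v) + (q * u + 1) ^ 2 * (q * v) - (q * v) ^ 3 / 3),
       q ^ 2 * (-(q * u + 1) ^ 2 + (q * v) ^ 2 + 1))) := by
  obtain ⟨S, hS, tS⟩ := aux_sin
  obtain ⟨C, hC, tC⟩ := aux_cos
  obtain ⟨Sh, hSh, tSh⟩ := aux_sinh
  obtain ⟨Ch, hCh, tCh⟩ := aux_cosh
  have hA0 : ∀ᶠ t in l, A t ≠ 0 := hA.eventually_ne (by simpa using hq)
  have tu : Tendsto (fun _ : ℝ => u) l (𝓝 u) := tendsto_const_nhds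
  have tv : Tendsto (fun _ : ℝ => v) l (𝓝 v) := tendsto_const_nhds
  have t2 : Tendsto (fun _ : ℝ => (2:ℝ)) l (𝓝 2) := tendsto_const_nhds
  have t1 : Tendsto (fun _ : ℝ => (1:ℝ)) l (𝓝 1) := tendsto_const_nhds
  have ty : Tendsto (fun t => a t * u + a t * w t) l (𝓝 0) := by
    simpa using (ha.mul tu).add (ha.mul hw)
  have tw : Tendsto (fun t => a t * w t) l (𝓝 0) := by simpa using ha.mul hw
  have tav : Tendsto (fun t => a t * v) l (𝓝 0) := by simpa using ha.mul tv
  have sy := tS.comp ty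
  have sw := tS.comp tw
  have cy := tC.comp ty
  have cw := tC.comp tw
  have shv := tSh.comp tav
  have chv := tCh.comp tav
  simp only [Function.comp_def] at sy sw cy cw shv chv
  have huw := tu.add hw
  refine Tendsto.prodMk_nhds ?_ (Tendsto.prodMk_nhds ?_ ?_)
  · have key := ((((hA.pow 2).mul (((((huw.pow 3).mul sy).mul (t1.add ((tav.pow 2).mul chv))).sub
      ((huw.mul (tv.pow 2)).mul chv)).sub ((hw.pow 3).mul sw))).add
      ((tu.add ((huw.mul (t1.sub ((ty.pow 2).mul sy))).mul (t1.add ((tav.pow 2).mul chv)))).sub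
        (hw.mul (t1.sub ((tw.pow 2).mul sw)))))).div (t2.mul hA) (by simpa using hq)
    refine Tendsto.congr' ?_ (key.trans (le_of_eq ?_))
    · filter_upwards [ha0, hA0] with t h1 h2
      rw [hS, hS, hCh]
      simp only [Pi.div_apply]
      field_simp
      ring
    · congr 1
      field_simp
      ring_nf
      linear_combination (-2 * (q * u * 144 + q ^ 2 * u ^ 2 * 72 - q ^ 2 * v ^ 2 * 72 - q ^ 3 * u * v ^ 2 * 72 + q ^ 3 * u ^ 3 * 24)) * hq4
  · have key := ((((hA.pow 2).mul ((((huw.pow 2).mul cy).mul (tv.mul (t1.add ((tav.pow 2).mul shv)))).sub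
      ((tv.pow 3).mul shv)))).sub
      (tv.add ((t1.sub ((ty.pow 2).mul cy)).mul (tv.mul (t1.add ((tav.pow 2).mul shv)))))).div
       (t2.mul hA) (by simpa using hq)
    refine Tendsto.congr' ?_ (key.trans (le_of_eq ?_))
    · filter_upwards [ha0, hA0] with t h1 h2
      rw [hC, hSh]
      simp only [Pi.div_apply]
      field_simp
      ring
    · congr 1
      field_simp
      ring_nf
      linear_combination (-2 * (v * q * u * 144 + v * q ^ 2 * u ^ 2 * 72 - v ^ 3 * q ^ 2 * 24)) * hq4
  · have key := (((t1.sub ((ty.pow 2).mul cy)).mul ((tv.pow 2).mul chv)).sub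
      ((huw.pow 2).mul cy)).add ((hw.pow 2).mul cw)
    refine Tendsto.congr' ?_ (key.trans (le_of_eq ?_))
    · filter_upwards [ha0] with t h1
      rw [hC, hC, hCh]
      field_simp
      ring
    · congr 1
      field_simp
      ring_nf
      linear_combination (-2 * (v ^ 2 * q ^ 2 * 2 - q * u * 4 - q ^ 2 * u ^ 2 * 2)) * hq4

lemma branchB {l : Filter ℝ} {b p : ℝ → ℝ} (q u v : ℝ) (hq : q ≠ 0) (hq4 : q ^ 4 = 1 / 2)
    (hb : Tendsto b l (𝓝 0)) (hb0 : ∀ᶠ t in l, b t ≠ 0)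
    (hp : Tendsto p l (𝓝 q⁻¹)) :
    Tendsto (fun t =>
  (exp (-(b t * u)) *
      (((1 + b t * p t) * ((1 + b t * p t) * (exp (2 * b t * u) - 1) + 2) - 2) * cos (b t * v)
        - 2 * exp (b t * u) * (b t * (1 + b t * p t) * u + (1 + b t * p t) - 1))
      / (2 * b t ^ 2 * (1 + b t * p t) * ((1 + b t * p t) - 1)),
   exp (-(b t * u)) *
      (((1 + b t * p t) * exp (2 * b t * u) - (1 + b t * p t) + 2) * sin (b t * v)
        - 2 * b t * v * exp (b t * u))
      / (2 * b t ^ 2 * ((1 + b t * p t) - 1)),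
   -((b t * (1 + b t * p t) * u + exp (-(b t * u)) * cos (b t * v) - 1)
      / (b t ^ 2 * (1 + b t * p t))))) l
    (𝓝 (q ^ 2 * ((q * u + 1) - (q * u + 1) * (q * v) ^ 2 + (q * u + 1) ^ 3 / 3 - 4 / 3),
       q ^ 2 * (-(q * v) + (q * u + 1) ^ 2 * (q * v) - (q * v) ^ 3 / 3),
       q ^ 2 * (-(q * u + 1) ^ 2 + (q * v) ^ 2 + 1))) := by
  obtain ⟨S, hS, tS⟩ := aux_sin
  obtain ⟨C, hC, tC⟩ := aux_cos
  obtain ⟨Sh, hSh, tSh⟩ := aux_sinh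
  obtain ⟨Ch, hCh, tCh⟩ := aux_cosh
  obtain ⟨E, hE, tE⟩ := aux_exp_s15
  have hp0 : ∀ᶠ t in l, p t ≠ 0 := hp.eventually_ne (by simpa using hq)
  have tu : Tendsto (fun _ : ℝ => u) l (𝓝 u) := tendsto_const_nhds
  have tv : Tendsto (fun _ : ℝ => v) l (𝓝 v) := tendsto_const_nhds
  have t1 : Tendsto (fun _ : ℝ => (1:ℝ)) l (𝓝 1) := tendsto_const_nhds
  have tB : Tendsto (fun t => 1 + b t * p t) l (𝓝 1) := by simpa using t1.add (hb.mul hp)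
  have hB0 : ∀ᶠ t in l, 1 + b t * p t ≠ 0 := tB.eventually_ne one_ne_zero
  have tbu : Tendsto (fun t => b t * u) l (𝓝 0) := by simpa using hb.mul tu
  have tbn : Tendsto (fun t => -(b t * u)) l (𝓝 0) := by simpa using tbu.neg
  have tbv : Tendsto (fun t => b t * v) l (𝓝 0) := by simpa using hb.mul tv
  have sv := tS.comp tbv
  have cv := tC.comp tbv
  have shu := tSh.comp tbu
  have chu := tCh.comp tbu
  have eu := tE.comp tbu
  have en := tE.comp tbn
  simp only [Function.comp_def] at sv cv shu chu eu en
  have e2 : ∀ t, exp (2 * b t * u) = exp (b t * u) * exp (b t * u) := fun t => by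
    rw [← exp_add]; ring_nf
  have ei : ∀ t, exp (-(b t * u)) * exp (b t * u) = 1 := fun t => by
    rw [← exp_add]; simp
  have tcos := t1.sub ((tbv.pow 2).mul cv)
  have tsinh := t1.add ((tbu.pow 2).mul shu)
  refine Tendsto.prodMk_nhds ?_ (Tendsto.prodMk_nhds ?_ ?_)
  · have key := (((((((tu.pow 3).mul shu).mul tcos).sub (tu.mul ((tv.pow 2).mul cv))).div hp
        (inv_ne_zero hq)).add ((((tu.pow 2).mul eu).mul tcos).sub ((t1.add tbu).mul
          ((tv.pow 2).mul cv)))).add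
        ((hp.mul (tu.mul tsinh)).mul tcos)).div tB one_ne_zero
    refine Tendsto.congr' ?_ (key.trans (le_of_eq ?_))
    · filter_upwards [hb0, hp0, hB0] with t h1 h2 h3
      have hnum : exp (-(b t * u)) *
          (((1 + b t * p t) * ((1 + b t * p t) * (exp (2 * b t * u) - 1) + 2) - 2) * cos (b t * v)
          - 2 * exp (b t * u) * (b t * (1 + b t * p t) * u + (1 + b t * p t) - 1))
          = 2 * (sinh (b t * u) * cos (b t * v) - b t * u)
            + 2 * (b t * p t) * (exp (b t * u) * cos (b t * v) - 1 - b t * u)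
            + 2 * (b t * p t) ^ 2 * (sinh (b t * u) * cos (b t * v)) := by
        rw [e2, sinh_eq]
        linear_combination ((1 + b t * p t) ^ 2 * exp (b t * u) * cos (b t * v)
          - 2 * (b t * (1 + b t * p t) * u + (1 + b t * p t) - 1)) * ei t
      rw [hnum, add_sub_cancel_left, hSh, hE, hC]
      simp only [Pi.div_apply]
      field_simp
      ring
    · congr 1
      field_simp
      ring_nf
      linear_combination (-2 * (q * u ^ 2 * 36 - q * v ^ 2 * 36 - q ^ 2 * u * v ^ 2 * 36 + q ^ 2 * u ^ 3 * 12 + u * 72)) * hq4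
  · have key := ((((((tu.pow 2).mul chu).mul (tv.mul (t1.sub ((tbv.pow 2).mul sv)))).sub
        ((tv.pow 3).mul sv)).div hp (inv_ne_zero hq))).add
        ((tu.mul tsinh).mul (tv.mul (t1.sub ((tbv.pow 2).mul sv))))
    refine Tendsto.congr' ?_ (key.trans (le_of_eq ?_))
    · filter_upwards [hb0, hp0] with t h1 h2
      have hnum : exp (-(b t * u)) *
          (((1 + b t * p t) * exp (2 * b t * u) - (1 + b t * p t) + 2) * sin (b t * v)
          - 2 * b t * v * exp (b t * u))
          = 2 * (cosh (b t * u) * sin (b t * v) - b t * v)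
            + 2 * (b t * p t) * (sinh (b t * u) * sin (b t * v)) := by
        rw [e2, sinh_eq, cosh_eq]
        linear_combination ((1 + b t * p t) * exp (b t * u) * sin (b t * v)
          - 2 * b t * v) * ei t
      rw [hnum, add_sub_cancel_left, hSh, hCh, hS]
      simp only [Pi.div_apply]
      field_simp
      ring
    · congr 1
      field_simp
      ring_nf
      linear_combination (-2 * (v * u * 216 + v * u ^ 2 * q * 108 - v ^ 3 * q * 36)) * hq4
  · have key := ((((hp.mul tu).add (((tu.pow 2).mul en).mul tcos)).sub
      ((t1.sub tbu).mul ((tv.pow 2).mul cv))).div tB one_ne_zero).neg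
    refine Tendsto.congr' ?_ (key.trans (le_of_eq ?_))
    · filter_upwards [hb0, hB0] with t h1 h2
      rw [hE, hC]
      simp only [Pi.div_apply]
      field_simp
      ring
    · congr 1
      field_simp
      ring_nf
      linear_combination (-2 * (-(u * 4) - u ^ 2 * q * 2 + q * v ^ 2 * 2)) * hq4

theorem family_continuous_at_enneper (u v : ℝ) :
    Tendsto (fun θ : ℝ => XA θ u v) (𝓝[>] (π / 4)) (𝓝 (EnneperMax u v)) ∧
    Tendsto (fun θ : ℝ => XB θ u v) (𝓝[<] (π / 4)) (𝓝 (EnneperMax u v)) := by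
  obtain ⟨q, hqd⟩ : ∃ q : ℝ, q = (2 : ℝ) ^ (-(1 : ℝ) / 4) := ⟨_, rfl⟩
  have hq : 0 < q := by rw [hqd]; positivity
  have hq4 : q ^ 4 = 1 / 2 := by
    rw [hqd, ← Real.rpow_natCast, ← Real.rpow_mul (by norm_num)]
    norm_num [Real.rpow_neg_one]
  have hs2 : 0 < √2 := by positivity
  have hss : √2 ^ 2 = 2 := Real.sq_sqrt (by norm_num)
  have hq2 : q ^ 2 = √2 / 2 := by
    have : (q ^ 2) ^ 2 = (√2 / 2) ^ 2 := by rw [div_pow, hss]; linarith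
    exact (pow_left_inj₀ (by positivity) (by positivity) (by norm_num)).mp this
  have hq2' : 1 / √2 = q ^ 2 := by rw [hq2]; field_simp; linarith
  have hqs : √(√2 / 2) = q := by rw [← hq2]; exact Real.sqrt_sq hq.le
  have hEM : EnneperMax u v =
      (q ^ 2 * ((q * u + 1) - (q * u + 1) * (q * v) ^ 2 + (q * u + 1) ^ 3 / 3 - 4 / 3),
       q ^ 2 * (-(q * v) + (q * u + 1) ^ 2 * (q * v) - (q * v) ^ 3 / 3),
       q ^ 2 * (-(q * u + 1) ^ 2 + (q * v) ^ 2 + 1)) := by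
    simp only [EnneperMax, hq2', ← hqd]
  have hc : Tendsto cos (𝓝 (π / 4)) (𝓝 (√2 / 2)) := by
    simpa using (continuous_cos.tendsto (π / 4))
  have hs : Tendsto sin (𝓝 (π / 4)) (𝓝 (√2 / 2)) := by
    simpa using (continuous_sin.tendsto (π / 4))
  have hrc : Tendsto (fun θ => √(cos θ)) (𝓝 (π / 4)) (𝓝 q) := by
    rw [← hqs]; exact hc.sqrt
  have hrs : Tendsto (fun θ => √(sin θ)) (𝓝 (π / 4)) (𝓝 q) := by
    rw [← hqs]; exact hs.sqrt
  have hcpos : ∀ᶠ θ in 𝓝 (π / 4), 0 < cos θ := hc.eventually (lt_mem_nhds (by positivity))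
  have hpi := Real.pi_pos
  have hfac : ∀ θ, sin θ - cos θ = √2 * sin (θ - π / 4) := fun θ => by
    rw [sin_sub, cos_pi_div_four, sin_pi_div_four]
    linear_combination (cos θ / 2 - sin θ / 2) * hss
  have hinv : Tendsto (fun θ => (√(cos θ))⁻¹) (𝓝 (π / 4)) (𝓝 q⁻¹) := hrc.inv₀ hq.ne'
  rw [hEM]
  constructor
  · have hle : 𝓝[>] (π / 4) ≤ 𝓝 (π / 4) := nhdsWithin_le_nhds
    obtain ⟨T, hT, tT⟩ := aux_arctan
    have ha : Tendsto (fun θ => √(sin θ - cos θ)) (𝓝 (π / 4)) (𝓝 0) := by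
      simpa using (hs.sub hc).sqrt
    have ha0 : ∀ᶠ θ in 𝓝[>] (π / 4), √(sin θ - cos θ) ≠ 0 := by
      have h1 : ∀ᶠ θ in 𝓝[>] (π / 4), θ < π / 2 := hle (gt_mem_nhds (by linarith))
      filter_upwards [h1, self_mem_nhdsWithin] with θ h1 h2
      have h2 : π / 4 < θ := h2
      rw [hfac]
      have := sin_pos_of_pos_of_lt_pi (x := θ - π / 4) (by linarith) (by linarith)
      positivity
    have hr : Tendsto (fun θ => √(sin θ - cos θ) * (√(cos θ))⁻¹) (𝓝 (π / 4)) (𝓝 0) := by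
      simpa using ha.mul hinv
    have hw := hinv.mul (tT.comp hr)
    rw [mul_one] at hw
    have hA := hrc.add hrs
    rw [← two_mul] at hA
    refine Tendsto.congr' ?_ (branchA q u v hq.ne' hq4 (ha.mono_left hle) ha0
      (hw.mono_left hle) (hA.mono_left hle))
    filter_upwards [hle hcpos] with θ hc
    have h3 : arctan √(tan θ - 1) = √(sin θ - cos θ) *
        ((√(cos θ))⁻¹ * (T ∘ fun θ => √(sin θ - cos θ) * (√(cos θ))⁻¹) θ) := by
      have : tan θ - 1 = (sin θ - cos θ) / cos θ := by rw [tan_eq_sin_div_cos]; field_simp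
      rw [this, Real.sqrt_div' _ hc.le, hT, div_eq_mul_inv]
      simp only [Function.comp]; ring
    simp only [XA, h3]
  · have hle : 𝓝[<] (π / 4) ≤ 𝓝 (π / 4) := nhdsWithin_le_nhds
    have ha : Tendsto (fun θ => √(cos θ - sin θ)) (𝓝 (π / 4)) (𝓝 0) := by
      simpa using (hc.sub hs).sqrt
    have ha0 : ∀ᶠ θ in 𝓝[<] (π / 4), √(cos θ - sin θ) ≠ 0 := by
      have h1 : ∀ᶠ θ in 𝓝[<] (π / 4), 0 < θ := hle (lt_mem_nhds (by linarith))
      filter_upwards [h1, self_mem_nhdsWithin] with θ h1 h2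
      have h2 : θ < π / 4 := h2
      have h4 : cos θ - sin θ = √2 * sin (π / 4 - θ) := by
        rw [← neg_sub θ, sin_neg]; linarith [hfac θ]
      rw [h4]
      have := sin_pos_of_pos_of_lt_pi (x := π / 4 - θ) (by linarith) (by linarith)
      positivity
    refine Tendsto.congr' ?_ (branchB q u v hq.ne' hq4 (ha.mono_left hle) ha0
      (hinv.mono_left hle))
    filter_upwards [hle hcpos] with θ hc
    have h3 : √(1 - tan θ) = √(cos θ - sin θ) * (√(cos θ))⁻¹ := by
      have : 1 - tan θ = (cos θ - sin θ) / cos θ := by rw [tan_eq_sin_div_cos]; field_simp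
      rw [this, Real.sqrt_div' _ hc.le, div_eq_mul_inv]
    simp only [XB, h3]
end

section
/- For δ ∈ (0,1] define X_CL^δ : ℝ² → ℝ³ by X_CL^δ(u,v) = ( e^{−δu}·[ ((δ² + 1)e^{2δu} − 1)·cos(δv) − δ(2u + δ)e^{δu} ] / (2δ³), (e^{δu}·sin(δv) − δv)/δ², e^{−δu}·[ −((δ² − 1)e^{2δu} + 1)·cos(δv) − δ(2u − δ)e^{δu} ] / (2δ³) ). Then for every fixed (u,v) ∈ ℝ², the limit as δ → 0⁺ exists and lim_{δ→0⁺} X_CL^δ(u,v) = ( (u − uv² + u³/3)/2, uv, (−u − uv² + u³/3)/2 ), i.e., the family X_CL^δ converges pointwise to the parametrization of the maximal catenoid with lightlike axis. (This is the continuous deformation from the maximal Bonnet-type surface with lightlike axial direction, at δ = 1, to the maximal catenoid with lightlike axis.) -/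
open Real Filter Topology

/-- The deformation family X_CL^δ joining the maximal Bonnet-type surface with
lightlike axial direction (δ = 1) to the maximal catenoid with lightlike axis. -/
noncomputable def XCL (δ u v : ℝ) : ℝ × ℝ × ℝ :=
  (Real.exp (-(δ * u)) *
      (((δ ^ 2 + 1) * Real.exp (2 * δ * u) - 1) * Real.cos (δ * v)
        - δ * (2 * u + δ) * Real.exp (δ * u)) / (2 * δ ^ 3),
   (Real.exp (δ * u) * Real.sin (δ * v) - δ * v) / δ ^ 2,
   Real.exp (-(δ * u)) *
      (-(((δ ^ 2 - 1) * Real.exp (2 * δ * u) + 1) * Real.cos (δ * v))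
        - δ * (2 * u - δ) * Real.exp (δ * u)) / (2 * δ ^ 3))

lemma aux_slope_s16 (f : ℝ → ℝ) (f' : ℝ) (h : HasDerivAt f f' 0) (h0 : f 0 = 0) :
    Tendsto (fun t : ℝ => f t / t) (𝓝[>] (0 : ℝ)) (𝓝 f') := by
  have := h.tendsto_slope_zero_right
  refine this.congr fun t => ?_
  simp [h0, div_eq_inv_mul]

lemma aux_sin_s16 (v : ℝ) : Tendsto (fun t : ℝ => sin (t * v) / t) (𝓝[>] (0 : ℝ)) (𝓝 v) := by
  refine aux_slope_s16 (fun t => sin (t * v)) v ?_ (by simp)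
  have := ((hasDerivAt_id (0 : ℝ)).mul_const v).sin
  simpa using this

lemma aux_sinh_s16 (v : ℝ) : Tendsto (fun t : ℝ => sinh (t * v) / t) (𝓝[>] (0 : ℝ)) (𝓝 v) := by
  refine aux_slope_s16 (fun t => sinh (t * v)) v ?_ (by simp)
  have := ((hasDerivAt_id (0 : ℝ)).mul_const v).sinh
  simpa using this

lemma aux_exp_s16 (v : ℝ) : Tendsto (fun t : ℝ => (exp (t * v) - 1) / t) (𝓝[>] (0 : ℝ)) (𝓝 v) := by
  refine aux_slope_s16 (fun t => exp (t * v) - 1) v ?_ (by simp)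
  have := (((hasDerivAt_id (0 : ℝ)).mul_const v).exp).sub_const 1
  simpa using this

lemma aux_cos_s16 (v : ℝ) :
    Tendsto (fun t : ℝ => (cos (t * v) - 1) / t ^ 2) (𝓝[>] (0 : ℝ)) (𝓝 (-v ^ 2 / 2)) := by
  have h := ((aux_sin_s16 (v / 2)).pow 2).const_mul (-2)
  have e : -2 * (v / 2) ^ 2 = -v ^ 2 / 2 := by ring
  rw [e] at h
  refine h.congr fun t => ?_
  have h1 : cos (t * v) = 1 - 2 * sin (t * (v / 2)) ^ 2 := by
    rw [show t * v = 2 * (t * (v / 2)) by ring, cos_two_mul, cos_sq']; ring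
  rw [h1]; ring

lemma aux_cosh_s16 (v : ℝ) :
    Tendsto (fun t : ℝ => (cosh (t * v) - 1) / t ^ 2) (𝓝[>] (0 : ℝ)) (𝓝 (v ^ 2 / 2)) := by
  have h := ((aux_sinh_s16 (v / 2)).pow 2).const_mul 2
  have e : 2 * (v / 2) ^ 2 = v ^ 2 / 2 := by ring
  rw [e] at h
  refine h.congr fun t => ?_
  have h1 : cosh (t * v) = 1 + 2 * sinh (t * (v / 2)) ^ 2 := by
    rw [show t * v = 2 * (t * (v / 2)) by ring, cosh_two_mul, cosh_sq]; ring
  rw [h1]; ring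

lemma aux_id : Tendsto (fun t : ℝ => t) (𝓝[>] (0 : ℝ)) (𝓝 0) :=
  tendsto_id.mono_left nhdsWithin_le_nhds

lemma aux_cont (f : ℝ → ℝ) (hf : Continuous f) (h0 : f 0 = 0) :
    Tendsto f (𝓝[>] (0 : ℝ)) (𝓝 0) := by
  have := hf.tendsto 0
  rw [h0] at this
  exact this.mono_left nhdsWithin_le_nhds

lemma aux_sin3 (v : ℝ) :
    Tendsto (fun t : ℝ => (sin (t * v) - t * v) / t ^ 2) (𝓝[>] (0 : ℝ)) (𝓝 0) := by
  refine HasDerivAt.lhopital_zero_nhdsGT (f' := fun t => v * (cos (t * v) - 1))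
    (g' := fun t => 2 * t) ?_ ?_ ?_ ?_ ?_ ?_
  · refine Eventually.of_forall fun t => ?_
    have h : HasDerivAt (fun t : ℝ => t * v) v t := by
      simpa using (hasDerivAt_id t).mul_const v
    exact (h.sin.sub h).congr_deriv (by ring)
  · exact Eventually.of_forall fun t => by simpa using hasDerivAt_pow 2 t
  · filter_upwards [self_mem_nhdsWithin] with t ht
    have : (0 : ℝ) < t := ht
    positivity
  · exact aux_cont _ (by fun_prop) (by simp)
  · exact aux_cont _ (by fun_prop) (by simp)
  · have h := (aux_id.mul (aux_cos_s16 v)).const_mul (v / 2)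
    simp only [zero_mul, mul_zero] at h
    refine h.congr' ?_
    filter_upwards [self_mem_nhdsWithin] with t ht
    have : t ≠ 0 := ne_of_gt ht
    field_simp

lemma aux_sinh3 (u : ℝ) :
    Tendsto (fun t : ℝ => (sinh (t * u) - t * u) / t ^ 3) (𝓝[>] (0 : ℝ)) (𝓝 (u ^ 3 / 6)) := by
  refine HasDerivAt.lhopital_zero_nhdsGT (f' := fun t => u * (cosh (t * u) - 1))
    (g' := fun t => 3 * t ^ 2) ?_ ?_ ?_ ?_ ?_ ?_
  · refine Eventually.of_forall fun t => ?_
    have h : HasDerivAt (fun t : ℝ => t * u) u t := by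
      simpa using (hasDerivAt_id t).mul_const u
    exact (h.sinh.sub h).congr_deriv (by ring)
  · exact Eventually.of_forall fun t => by simpa using hasDerivAt_pow 3 t
  · filter_upwards [self_mem_nhdsWithin] with t ht
    have : (0 : ℝ) < t := ht
    positivity
  · exact aux_cont _ (by fun_prop) (by simp)
  · exact aux_cont _ (by fun_prop) (by simp)
  · have h := (aux_cosh_s16 u).const_mul (u / 3)
    rw [show u / 3 * (u ^ 2 / 2) = u ^ 3 / 6 by ring] at h
    refine h.congr fun t => ?_
    ring

lemma aux_cos1 (v : ℝ) : Tendsto (fun t : ℝ => cos (t * v)) (𝓝[>] (0 : ℝ)) (𝓝 1) := by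
  have h : Continuous fun t : ℝ => cos (t * v) := by fun_prop
  have := h.tendsto 0
  simp only [zero_mul, cos_zero] at this
  exact this.mono_left nhdsWithin_le_nhds

/-- At every fixed (u,v), X_CL^δ(u,v) converges as δ → 0⁺ to the
parametrization of the maximal catenoid with lightlike axis. -/
theorem XCL_tendsto_lightlike_catenoid (u v : ℝ) :
    Tendsto (fun δ : ℝ => XCL δ u v) (𝓝[>] (0 : ℝ))
      (𝓝 ((u - u * v ^ 2 + u ^ 3 / 3) / 2, u * v, (-u - u * v ^ 2 + u ^ 3 / 3) / 2)) := by
  have hs := (aux_sinh_s16 u).mul (aux_cos_s16 v)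
  have ht := (aux_exp_s16 u).mul (aux_cos1 v)
  have hb := aux_id.mul (aux_cos_s16 v)
  have hA := aux_sinh3 u
  have key : ∀ t : ℝ, exp (2 * t * u) = exp (t * u) ^ 2 := fun t => by
    rw [← exp_nat_mul]; congr 1; push_cast; ring
  unfold XCL
  refine Tendsto.prodMk_nhds ?_ (Tendsto.prodMk_nhds ?_ ?_)
  · have h := (hs.add hA).add ((ht.add hb).div_const 2)
    convert h.congr' ?_ using 2
    · ring
    filter_upwards [self_mem_nhdsWithin] with t ht
    have h0 : t ≠ 0 := ne_of_gt ht
    have he := exp_ne_zero (t * u)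
    rw [key, sinh_eq, exp_neg]
    field_simp
    ring
  · have h := ((aux_exp_s16 u).mul (aux_sin_s16 v)).add (aux_sin3 v)
    convert h.congr' ?_ using 2
    · ring
    filter_upwards [self_mem_nhdsWithin] with t ht
    have h0 : t ≠ 0 := ne_of_gt ht
    field_simp
    ring
  · have h := (hs.add hA).sub ((ht.add hb).div_const 2)
    convert h.congr' ?_ using 2
    · ring
    filter_upwards [self_mem_nhdsWithin] with t ht
    have h0 : t ≠ 0 := ne_of_gt ht
    have he := exp_ne_zero (t * u)
    rw [key, sinh_eq, exp_neg]
    field_simp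
    ring
end
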